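/- arXiv:1308.2765 — 2 statements merged into one kernel-verified Lean document; each statement's English description precedes it below -/
import Mathlib

section
/- Let d, n be positive integers, μ ∈ ℝ^d, σ² > 0 and η = 1/σ². Let π(μ, η) be a (nonnegative, measurable) prior density on ℝ^d × (0,∞), and for l ∈ {n, n+1} define the marginal m_π(z, v; l) = ∫_{(0,∞)} ∫_{ℝ^d} φ(z; μ, (lη)^{−1}) η γ(ηv; (l−1)d) π(μ, η) dμ dη and ρ_π(z, v; l) = v·m_π(z, v; l). Then, for every y, x̄_n ∈ ℝ^d and s_n > 0 for which all the integrals involved are finite and the denominators nonzero, the Bayesian predictive density satisfies p̂_π(y | x̄_n, s_n) = [ρ_π(x̄_{n+1}, s_{n+1}; n+1) / ρ_π(x̄_n, s_n; n)] · p̂_R(y | x̄_n, s_n), where x̄_{n+1} = (n x̄_n + y)/(n+1) and s_{n+1} = s_n + n‖y − x̄_n‖²/(n+1). -/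
/-!
The Bayesian predictive density and the marginals are integrals over the same parameter space, and the
claimed identity already holds between the integrands. For fixed `η > 0` and `μ`, the decomposition
`‖y - μ‖² + n ‖x̄ - μ‖² = (n + 1) ‖x̄' - μ‖² + n / (n + 1) ‖y - x̄‖²`, with `x̄'` the updated mean, matches
the exponentials (`sq_dist_decomposition`), and the remaining factors are powers of positive numbers, which
are compared through their logarithms (`integrand_eq`). The ratio of integrands is
`(s' / s) p̂_R(y | x̄, s)`, free of `(μ, η)`, and comes out of the integral.

For `n = 1` the chi-square density has zero degrees of freedom; since `Real.Gamma 0 = 0` it vanishes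
identically, which contradicts the denominator being nonzero.
-/

open MeasureTheory Set

noncomputable section

abbrev Euc (d : ℕ) := EuclideanSpace ℝ (Fin d)

/-- Isotropic `d`-variate Gaussian density with mean `θ` and covariance `τ I_d`. -/
def gaussPdf (d : ℕ) (z θ : Euc d) (τ : ℝ) : ℝ :=
  (2 * Real.pi * τ) ^ (-(d : ℝ) / 2) * Real.exp (-‖z - θ‖ ^ 2 / (2 * τ))

/-- Chi-square density with `k` degrees of freedom. -/
def chiSqPdf (k t : ℝ) : ℝ :=
  t ^ (k / 2 - 1) * Real.exp (-t / 2) / ((2 : ℝ) ^ (k / 2) * Real.Gamma (k / 2))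

/-- Numerator of the Bayesian predictive density. -/
def bayesPredNum (d n : ℕ) (pr : Euc d → ℝ → ℝ) (y xbar : Euc d) (s : ℝ) : ℝ :=
  ∫ η in Ioi (0 : ℝ), ∫ μ, gaussPdf d y μ η⁻¹ * gaussPdf d xbar μ (((n : ℝ) * η)⁻¹) * η *
    chiSqPdf (((n : ℝ) - 1) * d) (η * s) * pr μ η

/-- Denominator of the Bayesian predictive density. -/
def bayesPredDen (d n : ℕ) (pr : Euc d → ℝ → ℝ) (xbar : Euc d) (s : ℝ) : ℝ :=
  ∫ η in Ioi (0 : ℝ), ∫ μ, gaussPdf d xbar μ (((n : ℝ) * η)⁻¹) * η *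
    chiSqPdf (((n : ℝ) - 1) * d) (η * s) * pr μ η

/-- Bayesian predictive density with respect to the prior `pr`. -/
def bayesPred (d n : ℕ) (pr : Euc d → ℝ → ℝ) (y xbar : Euc d) (s : ℝ) : ℝ :=
  bayesPredNum d n pr y xbar s / bayesPredDen d n pr xbar s

/-- Best equivariant predictive density. -/
def bestEquiv (d n : ℕ) (y xbar : Euc d) (s : ℝ) : ℝ :=
  (Real.Gamma ((n : ℝ) * d / 2) / Real.Gamma (((n : ℝ) - 1) * d / 2)) *
    ((n : ℝ) / (((n : ℝ) + 1) * Real.pi * s)) ^ ((d : ℝ) / 2) *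
    (1 + ((n : ℝ) / (((n : ℝ) + 1) * s)) * ‖y - xbar‖ ^ 2) ^ (-((n : ℝ) * d) / 2)

/-- Marginal density `m_π(z, v; l)`. -/
def marginalDens (d : ℕ) (pr : Euc d → ℝ → ℝ) (l : ℕ) (z : Euc d) (v : ℝ) : ℝ :=
  ∫ η in Ioi (0 : ℝ), ∫ μ, gaussPdf d z μ (((l : ℝ) * η)⁻¹) * η *
    chiSqPdf (((l : ℝ) - 1) * d) (η * v) * pr μ η

/-- `ρ_π(z, v; l) = v · m_π(z, v; l)`. -/
def rhoDens (d : ℕ) (pr : Euc d → ℝ → ℝ) (l : ℕ) (z : Euc d) (v : ℝ) : ℝ :=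
  v * marginalDens d pr l z v

/-- Kullback–Leibler risk of a predictive density `p`. -/
def klRisk (d n : ℕ) (μ0 : Euc d) (σ2 : ℝ) (p : Euc d → Euc d → ℝ → ℝ) : ℝ :=
  ∫ s in Ioi (0 : ℝ), ∫ xbar, gaussPdf d xbar μ0 (σ2 / n) *
    (chiSqPdf (((n : ℝ) - 1) * d) (s / σ2) / σ2) *
    ∫ y, gaussPdf d y μ0 σ2 * Real.log (gaussPdf d y μ0 σ2 / p y xbar s)

/-- Gaussian-mixture prior `π_GM` built from `q` with shape parameter `ν` (`a = ν - d/2 - 1`). -/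
def gmPrior (d : ℕ) (ν : ℝ) (q : ℝ → ℝ) (μ : Euc d) (η : ℝ) : ℝ :=
  ∫ l in Ioo (0 : ℝ) 1, gaussPdf d μ 0 (η⁻¹ * l⁻¹ * (1 - l)) *
    η ^ (ν - (d : ℝ) / 2 - 1) * l ^ (ν - (d : ℝ) / 2 - 1) * q l

/-- The Beta function. -/
def betaFun (a b : ℝ) : ℝ := Real.Gamma a * Real.Gamma b / Real.Gamma (a + b)

/-- Digamma function. -/
def digamma (x : ℝ) : ℝ := deriv (fun y => Real.log (Real.Gamma y)) x

/-- The function `g(n, d, ν)`. -/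
def gFun (n d : ℕ) (ν : ℝ) : ℝ :=
  if d ≤ n then
    (1 / ν) * Real.log (betaFun ν ((n : ℝ) * d / 2 - ((d : ℝ) - ν) / n) / betaFun ν ((n : ℝ) * d / 2))
  else
    (1 / ((n : ℝ) * ν)) * (((d : ℝ) - ν) / ((n : ℝ) * d / 2 - 1)) * Real.log (1 + ν)

/-- The function `h(n, d)`. -/
def hFun (n d : ℕ) : ℝ :=
  ((1 + ((n : ℝ) + 1) * d / 2) / ((n : ℝ) * d / 2)) *
    (digamma (1 + ((n : ℝ) + 1) * d / 2) - digamma (1 + (n : ℝ) * d / 2))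

/-- The particular function `q` of equation (5) of the paper. -/
def qLow (d n : ℕ) (ν : ℝ) (l : ℝ) : ℝ :=
  (1 - l) ^ (((n : ℝ) - 1) * d / 2 - 1) *
    (1 - ((n : ℝ) - 1) * l / n) ^ (-(((n : ℝ) - 2) * d / 2) - ν)

/-- The quantity `J_l`. -/
def Jquant (d : ℕ) (ν : ℝ) (q : ℝ → ℝ) (l w : ℝ) : ℝ :=
  ∫ t in Ioo (0 : ℝ) 1, t ^ (ν - 1) * (1 + (l - 1) * t) ^ ((d : ℝ) / 2 - ν - 1) *
    (1 + w * t) ^ (-((l - 1) * (d : ℝ) / 2) - ν) * q (l * t / (1 + (l - 1) * t))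

/-- The statistic `x̄_{n+1} = (n x̄_n + y)/(n+1)`. -/
def newMean {d : ℕ} (n : ℕ) (xbar y : Euc d) : Euc d :=
  (((n : ℝ) + 1)⁻¹) • ((n : ℝ) • xbar + y)

/-- The statistic `s_{n+1} = s_n + n ‖y - x̄_n‖² / (n+1)`. -/
def newS {d : ℕ} (n : ℕ) (xbar y : Euc d) (s : ℝ) : ℝ :=
  s + (n : ℝ) * ‖y - xbar‖ ^ 2 / ((n : ℝ) + 1)

/-- `w_l = l ‖x̄_l‖² / s_l`. -/
def wStat {d : ℕ} (l : ℝ) (z : Euc d) (v : ℝ) : ℝ := l * ‖z‖ ^ 2 / v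

/-- `u_l = w_l / (1 + w_l)`. -/
def uStat {d : ℕ} (l : ℝ) (z : Euc d) (v : ℝ) : ℝ :=
  wStat l z v / (1 + wStat l z v)

/-- Expectation with respect to the joint density of `(x̄_n, s_n, y)`. -/
def expVal (d n : ℕ) (μ0 : Euc d) (σ2 : ℝ) (f : Euc d → ℝ → Euc d → ℝ) : ℝ :=
  ∫ s in Ioi (0 : ℝ), ∫ xbar, ∫ y,
    gaussPdf d xbar μ0 (σ2 / n) * (chiSqPdf (((n : ℝ) - 1) * d) (s / σ2) / σ2) *
      gaussPdf d y μ0 σ2 * f xbar s y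

/-- Expectation with respect to the joint density of `(x̄_n, s_n)`. -/
def expVal2 (d n : ℕ) (μ0 : Euc d) (σ2 : ℝ) (f : Euc d → ℝ → ℝ) : ℝ :=
  ∫ s in Ioi (0 : ℝ), ∫ xbar, gaussPdf d xbar μ0 (σ2 / n) *
    (chiSqPdf (((n : ℝ) - 1) * d) (s / σ2) / σ2) * f xbar s

/-- Sum-of-squares decomposition behind the updates `x̄_{n+1}` and `s_{n+1}`. -/
lemma sq_dist_decomposition {d : ℕ} (n : ℕ) (y xbar μ : Euc d) :
    ‖y - μ‖ ^ 2 + n * ‖xbar - μ‖ ^ 2 =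
      ((n : ℝ) + 1) * ‖newMean n xbar y - μ‖ ^ 2 + n * ‖y - xbar‖ ^ 2 / ((n : ℝ) + 1) := by
  have hN : (n : ℝ) + 1 ≠ 0 := by positivity
  have h1 : newMean n xbar y - μ =
      ((n : ℝ) + 1)⁻¹ • ((n : ℝ) • (xbar - μ) + (y - μ)) := by
    unfold newMean
    rw [← sub_eq_zero]
    have : μ = ((n : ℝ) + 1)⁻¹ • (((n : ℝ) + 1) • μ) := by
      rw [smul_smul, inv_mul_cancel₀ hN, one_smul]
    nth_rewrite 1 [this]
    module
  have h2 : y - xbar = (y - μ) - (xbar - μ) := by abel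
  rw [h1, h2]
  generalize y - μ = a
  generalize xbar - μ = b
  rw [norm_smul, mul_pow, norm_add_sq_real, norm_sub_sq_real, norm_smul, inner_smul_left,
    real_inner_comm]
  simp only [norm_inv, Real.norm_eq_abs, inv_pow, sq_abs, mul_pow, conj_trivial]
  field_simp
  ring

/-- The integrand of the predictive numerator is the integrand of the marginal at the updated statistics,
up to a factor that does not depend on the parameters. -/
lemma integrand_eq {d n : ℕ} (hd : 0 < d) (hn : 1 < n) (y xbar μ : Euc d) {s η : ℝ}
    (hs : 0 < s) (hη : 0 < η) :
    gaussPdf d y μ η⁻¹ * gaussPdf d xbar μ (((n : ℝ) * η)⁻¹) * η *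
        chiSqPdf (((n : ℝ) - 1) * d) (η * s) =
      (newS n xbar y s / s * bestEquiv d n y xbar s) *
        (gaussPdf d (newMean n xbar y) μ ((((n + 1 : ℕ) : ℝ) * η)⁻¹) * η *
          chiSqPdf ((((n + 1 : ℕ) : ℝ) - 1) * d) (η * newS n xbar y s)) := by
  have hd' : (0 : ℝ) < d := by exact_mod_cast hd
  have hn1 : (0 : ℝ) < (n : ℝ) - 1 := by
    have : (1 : ℝ) < n := by exact_mod_cast hn
    linarith
  have hn0 : (0 : ℝ) < n := by linarith
  have hN : (0 : ℝ) < (n : ℝ) + 1 := by linarith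
  have hpi := Real.pi_pos
  have hS : 0 < newS n xbar y s := by unfold newS; positivity
  have hG1 : 0 < Real.Gamma (((n : ℝ) - 1) * d / 2) := Real.Gamma_pos_of_pos (by positivity)
  have hG2 : 0 < Real.Gamma ((n : ℝ) * d / 2) := Real.Gamma_pos_of_pos (by positivity)
  have hsq := sq_dist_decomposition n y xbar μ
  have hB : 1 + (n : ℝ) / (((n : ℝ) + 1) * s) * ‖y - xbar‖ ^ 2 = newS n xbar y s / s := by
    unfold newS; field_simp
  have hR : (n : ℝ) * ‖y - xbar‖ ^ 2 / ((n : ℝ) + 1) = newS n xbar y s - s := by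
    unfold newS; ring
  rw [hR] at hsq
  unfold gaussPdf chiSqPdf bestEquiv
  rw [hB]
  push_cast
  rw [show (n : ℝ) + 1 - 1 = n by ring]
  generalize newS n xbar y s = S at *
  generalize ‖newMean n xbar y - μ‖ ^ 2 = C at *
  generalize ‖y - μ‖ ^ 2 = A at *
  generalize ‖xbar - μ‖ ^ 2 = B at *
  generalize Real.Gamma (((n : ℝ) - 1) * d / 2) = G1 at *
  generalize Real.Gamma ((n : ℝ) * d / 2) = G2 at *
  -- Both sides are positive, so it suffices to compare logarithms.
  apply Real.log_injOn_pos (mem_Ioi.2 (by positivity)) (mem_Ioi.2 (by positivity))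
  have hA : A = ((n : ℝ) + 1) * C + (S - s) - n * B := by linarith
  subst hA
  repeat rw [Real.log_mul (by positivity) (by positivity)]
  simp (disch := positivity) only [Real.log_mul, Real.log_div, Real.log_rpow, Real.log_exp, Real.log_inv]
  field_simp
  ring

/-- the Bayesian predictive density as a multiple of the best equivariant one,
`p̂_π(y | x̄_n, s_n) = [ρ_π(x̄_{n+1}, s_{n+1}; n+1) / ρ_π(x̄_n, s_n; n)] · p̂_R(y | x̄_n, s_n)`. -/
theorem stmt_0 (d n : ℕ) (hd : 0 < d) (hn : 0 < n)
    (pr : Euc d → ℝ → ℝ) (hpr_meas : Measurable (Function.uncurry pr))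
    (hpr_nonneg : ∀ μ η, 0 ≤ pr μ η)
    (y xbar : Euc d) (s : ℝ) (hs : 0 < s)
    (hInt_num : Integrable (fun p : ℝ × Euc d =>
        gaussPdf d y p.2 p.1⁻¹ * gaussPdf d xbar p.2 (((n : ℝ) * p.1)⁻¹) * p.1 *
          chiSqPdf (((n : ℝ) - 1) * d) (p.1 * s) * pr p.2 p.1)
      (((volume : Measure ℝ).restrict (Ioi 0)).prod volume))
    (hInt_den : Integrable (fun p : ℝ × Euc d =>
        gaussPdf d xbar p.2 (((n : ℝ) * p.1)⁻¹) * p.1 *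
          chiSqPdf (((n : ℝ) - 1) * d) (p.1 * s) * pr p.2 p.1)
      (((volume : Measure ℝ).restrict (Ioi 0)).prod volume))
    (hden_ne : bayesPredDen d n pr xbar s ≠ 0)
    (hrho_ne : rhoDens d pr n xbar s ≠ 0) :
    bayesPred d n pr y xbar s =
      (rhoDens d pr (n + 1) (newMean n xbar y) (newS n xbar y s) /
        rhoDens d pr n xbar s) * bestEquiv d n y xbar s := by
  have hn1 : 1 < n := by
    by_contra h
    obtain rfl : n = 1 := by omega
    exact hden_ne (by simp [bayesPredDen, chiSqPdf])
  have hnum : bayesPredNum d n pr y xbar s =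
      (newS n xbar y s / s * bestEquiv d n y xbar s) *
        marginalDens d pr (n + 1) (newMean n xbar y) (newS n xbar y s) := by
    unfold bayesPredNum marginalDens
    rw [← integral_const_mul]
    refine setIntegral_congr_fun measurableSet_Ioi fun η hη => ?_
    rw [← integral_const_mul]
    congr 1
    funext μ
    rw [integrand_eq hd hn1 y xbar μ hs hη]
    ring
  have hden : bayesPredDen d n pr xbar s = marginalDens d pr n xbar s := rfl
  rw [hden] at hden_ne
  unfold bayesPred rhoDens
  rw [hnum, hden]
  field_simp

end
end

section
/- Let n ≥ 2 and d ≥ 1 be integers with d ≤ 4, and let n = 2. Let q(λ) = (1−λ)^{(n−1)d/2−1} (1 − (n−1)λ/n)^{−(n−2)d/2−ν} for λ ∈ (0,1), and let π_GM be the Gaussian-mixture prior built from q with shape parameter ν. Then there exists a constant ν* > 0 (depending only on d) such that for every ν with 0 < ν ≤ ν*, the Bayesian predictive density p̂_{π_GM} dominates the best equivariant predictive density under Kullback–Leibler risk: for every μ ∈ ℝ^d and σ² > 0, R_KL((μ,σ²), p̂_{π_GM}) ≤ R_KL((μ,σ²), p̂_R). -/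
/-!
Put `T₂ = s + 2‖x̄‖²`, `s₃ = s + (2/3)‖y - x̄‖²`, `T₃ = T₂ + ‖y‖²` and `ω = s₃/T₃`. Integrating out the
mean and the precision and evaluating the remaining Beta-type integrals in the mixing variable gives
the Bayesian predictive density in closed form (`bayesPred_eq`): it equals the best equivariant one
times `(3T₂/(2T₃))^ν · F(ω)`, where `F` (`shrinkF`) is the expectation of an explicit function under
a `Beta(ν, d)` law. All logarithms involved are integrable, so the difference of the two risks is
the expectation of `ν log(3T₂/(2T₃)) + log F(ω)` (`klRisk_eq`, `log_ratio_bestEquiv`,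
`log_ratio_bayes`), and it has to be shown that this is nonnegative.

Bernoulli's and Jensen's inequalities give `log F(ω) ≥ ν κ ω` for `ν ≤ 1/200`, with `κ = 18/25` for
`d = 1` and `κ = 2/5` for `d ≥ 2` (`log_shrinkF_ge`). It therefore suffices that
`E log(T₃/T₂) ≤ log(3/2) + κ E ω` (`key_lintegral`), which no longer involves `ν`.

Writing `log(T₃/T₂)` as a Frullani integral and `1/T₃` as a Laplace integral, and using that
tilting the joint law by `exp(-x T₃)` gives again a law of the same family (`jointM_tilt3`), both
expectations become integrals over `p ∈ (0,1)` depending on `μ` only through `θ = ‖μ‖²/(2σ²)`; this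
is `one_dim_ineq`. There `log(3/2)` is itself written as a Frullani integral, for the weight
`(1-x)^(d-1) e^{-2θx}` cut off at `x = 1`. After subtraction the factor `e^{-3θp}` is common to both
sides, and what remains is an elementary comparison: pointwise for `2 ≤ d ≤ 4` (`poly_ineq_high`),
and through a chord inequality under the integral for `d = 1` (`low_dim_integral`).
-/

open MeasureTheory Set

noncomputable section

/-! ### Frullani's integral -/

open Filter Topology ENNReal in
/-- Frullani's integral for an antitone function, as a Lebesgue integral. -/
lemma frullani_lintegral {f : ℝ → ℝ} (hf : AntitoneOn f (Ioi 0)) (hm : Measurable f)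
    (hL : Tendsto f (𝓝[>] 0) (𝓝 1)) (hR : Tendsto f atTop (𝓝 0)) {a b : ℝ} (ha : 0 < a)
    (hab : a ≤ b) :
    ∫⁻ x in Ioi (0 : ℝ), ENNReal.ofReal ((f (a * x) - f (b * x)) / x) =
      ENNReal.ofReal (Real.log (b / a)) := by
  have hb : 0 < b := ha.trans_le hab
  have hloc : LocallyIntegrableOn f (Ioi 0) := by
    rw [locallyIntegrableOn_iff isOpen_Ioi.isLocallyClosed]
    intro k hk hkc
    exact (hf.mono hk).integrableOn_isCompact hkc
  have hlim := Frullani.tendsto_intervalIntegral hloc ha hb hL hR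
  have hu : Tendsto (fun n : ℕ => (((n : ℝ) + 1)⁻¹, ((n : ℝ) + 1))) atTop
      ((𝓝[>] (0 : ℝ)) ×ˢ (atTop : Filter ℝ)) := by
    have h1 : Tendsto (fun n : ℕ => (n : ℝ) + 1) atTop atTop :=
      tendsto_atTop_add_const_right _ _ tendsto_natCast_atTop_atTop
    exact (tendsto_inv_atTop_nhdsGT_zero.comp h1).prodMk h1
  have h2 := hlim.comp hu
  have hcov : AECover (volume.restrict (Ioi (0 : ℝ))) atTop
      (fun n : ℕ => Ioi (((n : ℝ) + 1)⁻¹) ∩ Iic ((n : ℝ) + 1)) := by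
    have h1 : Tendsto (fun n : ℕ => (n : ℝ) + 1) atTop atTop :=
      tendsto_atTop_add_const_right _ _ tendsto_natCast_atTop_atTop
    refine (aecover_Ioi_of_Ioi ?_).inter (aecover_Iic h1).restrict
    exact tendsto_inv_atTop_zero.comp h1
  have hmeas : Measurable fun x : ℝ => ENNReal.ofReal ((f (a * x) - f (b * x)) / x) := by
    fun_prop
  have h3 := hcov.lintegral_tendsto_of_nat (f := fun x : ℝ =>
    ENNReal.ofReal ((f (a * x) - f (b * x)) / x)) hmeas.aemeasurable
  refine tendsto_nhds_unique h3 ?_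
  have h4 := (ENNReal.continuous_ofReal.tendsto _).comp h2
  rw [sub_zero, smul_eq_mul, mul_one] at h4
  refine h4.congr fun n => ?_
  have hn : (0 : ℝ) < (n : ℝ) + 1 := by positivity
  have hle : ((n : ℝ) + 1)⁻¹ ≤ (n : ℝ) + 1 := by
    rw [inv_le_comm₀ hn hn]
    have : (1 : ℝ) ≤ (n : ℝ) + 1 := by linarith [n.cast_nonneg (α := ℝ)]
    exact (inv_le_one_of_one_le₀ this).trans this
  simp only [Function.comp]
  rw [Measure.restrict_restrict (measurableSet_Ioi.inter measurableSet_Iic),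
    intervalIntegral.integral_of_le hle, ← Ioi_inter_Iic]
  have hset : (Ioi (((n : ℝ) + 1)⁻¹) ∩ Iic ((n : ℝ) + 1)) ∩ Ioi 0 =
      Ioi (((n : ℝ) + 1)⁻¹) ∩ Iic ((n : ℝ) + 1) := by
    refine inter_eq_left.2 fun x hx => ?_
    exact (inv_pos.2 hn).trans hx.1
  rw [hset]
  have hkc : IsCompact (Icc (((n : ℝ) + 1)⁻¹) ((n : ℝ) + 1)) := isCompact_Icc
  rw [ofReal_integral_eq_lintegral_ofReal]
  · refine lintegral_congr fun x => ?_
    rw [smul_eq_mul, inv_mul_eq_div]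
  · have key : IntegrableOn (fun x => x⁻¹ • (f (a * x) - f (b * x)))
        (Icc (((n : ℝ) + 1)⁻¹) ((n : ℝ) + 1)) := by
      have hpos : ∀ x ∈ Icc (((n : ℝ) + 1)⁻¹) ((n : ℝ) + 1), 0 < x := fun x hx =>
        (inv_pos.2 hn).trans_le hx.1
      refine IntegrableOn.continuousOn_smul ?_ ?_ hkc
      · refine IntegrableOn.sub ?_ ?_
        · refine AntitoneOn.integrableOn_isCompact hkc fun x hx y hy hxy => ?_
          exact hf (mul_pos ha (hpos x hx)) (mul_pos ha (hpos y hy))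
            (mul_le_mul_of_nonneg_left hxy ha.le)
        · refine AntitoneOn.integrableOn_isCompact hkc fun x hx y hy hxy => ?_
          exact hf (mul_pos hb (hpos x hx)) (mul_pos hb (hpos y hy))
            (mul_le_mul_of_nonneg_left hxy hb.le)
      · exact continuousOn_inv₀.mono fun x hx => (hpos x hx).ne'
    exact key.mono_set (by rw [Ioi_inter_Iic]; exact Ioc_subset_Icc_self)
  · refine ae_restrict_of_forall_mem (measurableSet_Ioi.inter measurableSet_Iic) fun x hx => ?_
    have hx0 : 0 < x := (inv_pos.2 hn).trans hx.1
    have := hf (mul_pos ha hx0) (mul_pos hb hx0) (mul_le_mul_of_nonneg_right hab hx0.le)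
    exact smul_nonneg (inv_nonneg.2 hx0.le) (sub_nonneg.2 this)

/-! ### The one-dimensional inequality -/

/-- The weight `x ↦ (1-x)^(d-1) e^{-2θx}`, set to zero for `x ≥ 1` so that it can be evaluated at
`3p/2` as well as at `p` for `p ∈ (0,1)`. -/
def cutWeight (d : ℕ) (θ x : ℝ) : ℝ :=
  if x < 1 then (1 - x) ^ (d - 1) * Real.exp (-(2 * θ * x)) else 0

lemma cutWeight_measurable (d : ℕ) (θ : ℝ) : Measurable (cutWeight d θ) :=
  Measurable.ite measurableSet_Iio (by fun_prop) (by fun_prop)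

lemma cutWeight_antitone (d : ℕ) {θ : ℝ} (hθ : 0 ≤ θ) : AntitoneOn (cutWeight d θ) (Ioi 0) := by
  intro x hx y hy hxy
  simp only [cutWeight]
  rw [mem_Ioi] at hx hy
  split_ifs with h1 h2 h2
  · have h3 : 0 ≤ 1 - y := by linarith
    gcongr
  · linarith
  · have h3 : 0 ≤ 1 - x := by linarith
    positivity
  · exact le_rfl

open Filter Topology in
/-- Frullani's integral for `cutWeight` at the scales `1` and `3/2`. -/
lemma frullani_cutWeight (d : ℕ) {θ : ℝ} (hθ : 0 ≤ θ) :
    ∫⁻ x in Ioi (0 : ℝ), ENNReal.ofReal ((cutWeight d θ (1 * x) - cutWeight d θ (3 / 2 * x)) / x) =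
      ENNReal.ofReal (Real.log (3 / 2 / 1)) := by
  refine frullani_lintegral (cutWeight_antitone d hθ) (cutWeight_measurable d θ) ?_ ?_ one_pos
    (by norm_num)
  · have hc : Continuous fun x : ℝ => (1 - x) ^ (d - 1) * Real.exp (-(2 * θ * x)) := by fun_prop
    have h1 : Tendsto (fun x : ℝ => (1 - x) ^ (d - 1) * Real.exp (-(2 * θ * x))) (𝓝[>] 0) (𝓝 1) := by
      have := (hc.tendsto 0).mono_left (nhdsWithin_le_nhds (s := Ioi 0))
      simpa using this
    refine h1.congr' ?_
    filter_upwards [nhdsWithin_le_nhds (Iio_mem_nhds (zero_lt_one' ℝ))] with x hx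
    simp only [cutWeight]
    rw [if_pos (mem_Iio.1 hx)]
  · refine tendsto_const_nhds.congr' ?_
    filter_upwards [eventually_ge_atTop 1] with x hx
    simp only [cutWeight]
    rw [if_neg (not_lt.2 hx)]

/-- With `z = √(1-p)`, the comparison underlying the one-dimensional inequality for `2 ≤ d ≤ 4`. -/
lemma poly_ineq_high {d : ℕ} (hd2 : 2 ≤ d) (hd4 : d ≤ 4) {z : ℝ} (hz0 : 0 < z) (hz1 : z < 1)
    (hp : 3 / 2 * (1 - z ^ 2) < 1) :
    (1 - 3 / 2 * (1 - z ^ 2)) ^ (d - 1) ≤ z ^ (3 * d - 2) * (1 + 2 / 5 * d * (1 - z ^ 2)) := by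
  obtain rfl | hd3 : d = 2 ∨ 3 ≤ d := by omega
  · norm_num
    nlinarith [sq_nonneg (z ^ 2 - 1 / 2), sq_nonneg (z ^ 2), mul_pos hz0 hz0,
      mul_nonneg (sub_nonneg.2 hz1.le) (sq_nonneg (z ^ 2 - 3 / 4)),
      mul_nonneg (by nlinarith : (0 : ℝ) ≤ 1 - z ^ 2) (sq_nonneg (1 - z ^ 2 - 3 / 8))]
  · have h1 : 1 - 3 / 2 * (1 - z ^ 2) ≤ z ^ 3 := by nlinarith [sq_nonneg (z - 1)]
    have h2 : (1 : ℝ) ≤ z * (1 + 2 / 5 * d * (1 - z ^ 2)) := by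
      have hd : (3 : ℝ) ≤ d := by exact_mod_cast hd3
      have h3 : (1 : ℝ) ≤ z * (1 + 6 / 5 * (1 - z ^ 2)) := by
        have hz : (14 : ℝ) / 25 ≤ z := by nlinarith
        have : z * (1 + 6 / 5 * (1 - z ^ 2)) - 1 = (1 - z) * (6 / 5 * z ^ 2 + 6 / 5 * z - 1) := by
          ring
        have : 0 ≤ (1 - z) * (6 / 5 * z ^ 2 + 6 / 5 * z - 1) :=
          mul_nonneg (by linarith) (by nlinarith)
        linarith
      have : z * (1 + 6 / 5 * (1 - z ^ 2)) ≤ z * (1 + 2 / 5 * d * (1 - z ^ 2)) := by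
        have : 0 ≤ 1 - z ^ 2 := by nlinarith
        gcongr
        linarith
      linarith
    calc (1 - 3 / 2 * (1 - z ^ 2)) ^ (d - 1) ≤ (z ^ 3) ^ (d - 1) := by
          have : 0 ≤ 1 - 3 / 2 * (1 - z ^ 2) := by linarith
          gcongr
      _ ≤ (z ^ 3) ^ (d - 1) * (z * (1 + 2 / 5 * d * (1 - z ^ 2))) :=
          le_mul_of_one_le_right (by positivity) h2
      _ = z ^ (3 * d - 2) * (1 + 2 / 5 * d * (1 - z ^ 2)) := by
          rw [← mul_assoc, ← pow_mul, ← pow_succ]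
          congr 2
          omega

/-- `(1-p)^{3d/2-1}` as a natural power of `√(1-p)`. -/
lemma rpow_eq_sqrt_pow {d : ℕ} (hd : 1 ≤ d) {p : ℝ} (hp : p < 1) :
    (1 - p) ^ (3 * (d : ℝ) / 2 - 1) = √(1 - p) ^ (3 * d - 2) := by
  rw [Real.sqrt_eq_rpow, ← Real.rpow_natCast, ← Real.rpow_mul (by linarith)]
  congr 1
  rw [Nat.cast_sub (by omega)]
  push_cast
  ring

/-- Chord inequality for `d = 1`, followed by the Chebyshev-type bound for the linear function
`1 - 3p`, which changes sign at the midpoint of `(0, 2/3)`. -/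
lemma low_dim_integral {θ : ℝ} (hθ : 0 ≤ θ) :
    ∫ p in (0 : ℝ)..(2 / 3), Real.exp (-(3 * θ * p)) / (1 + √(1 - p)) ≤
      18 / 25 * ∫ p in (0 : ℝ)..(2 / 3), √(1 - p) * Real.exp (-(3 * θ * p)) := by
  have hden : ∀ p : ℝ, 1 + √(1 - p) ≠ 0 := fun p => by positivity
  have hi1 : IntervalIntegrable (fun p : ℝ => Real.exp (-(3 * θ * p)) / (1 + √(1 - p))) volume 0
      (2 / 3) := (Continuous.div (by fun_prop) (by fun_prop) hden).intervalIntegrable _ _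
  have hi2 : IntervalIntegrable (fun p : ℝ => 18 / 25 * (√(1 - p) * Real.exp (-(3 * θ * p)))) volume
      0 (2 / 3) := (by fun_prop : Continuous fun p : ℝ =>
        18 / 25 * (√(1 - p) * Real.exp (-(3 * θ * p)))).intervalIntegrable _ _
  rw [← intervalIntegral.integral_const_mul, ← sub_nonneg, ← intervalIntegral.integral_sub hi2 hi1]
  have hlin : ∫ p in (0 : ℝ)..(2 / 3), 11 / 50 * (1 - 3 * p) * Real.exp (-θ) = 0 := by
    rw [intervalIntegral.integral_mul_const, intervalIntegral.integral_const_mul,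
      intervalIntegral.integral_sub (continuous_const.intervalIntegrable _ _)
        ((by fun_prop : Continuous fun x : ℝ => 3 * x).intervalIntegrable _ _),
      intervalIntegral.integral_const_mul, integral_id]
    norm_num
  refine hlin.symm.le.trans ?_
  refine intervalIntegral.integral_mono_on (by norm_num)
    ((by fun_prop : Continuous fun p : ℝ => 11 / 50 * (1 - 3 * p) * Real.exp (-θ)).intervalIntegrable
      _ _) (hi2.sub hi1) fun p hp => ?_
  have hz2 : √(1 - p) ^ 2 = 1 - p := Real.sq_sqrt (by linarith [hp.2])
  have hz0 : 0 ≤ √(1 - p) := Real.sqrt_nonneg _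
  have hz1 : √(1 - p) ≤ 1 := Real.sqrt_le_one.2 (by linarith [hp.1])
  set z := √(1 - p)
  have hpz : p = 1 - z ^ 2 := by linarith
  have hz : (143 : ℝ) / 250 ≤ z := by nlinarith [hp.2]
  have hchord : 11 / 50 * (1 - 3 * p) ≤ 18 / 25 * z - 1 / (1 + z) := by
    rw [le_sub_iff_add_le, ← le_sub_iff_add_le', div_le_iff₀ (by linarith), hpz]
    have : 0 ≤ (1 - z) * (33 / 50 * z ^ 2 + 3 / 5 * z - 14 / 25) :=
      mul_nonneg (by linarith) (by nlinarith [hp.2])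
    nlinarith
  have hw : 11 / 50 * (1 - 3 * p) * Real.exp (-θ) ≤
      11 / 50 * (1 - 3 * p) * Real.exp (-(3 * θ * p)) := by
    rcases le_total (3 * p) 1 with h | h
    · have : Real.exp (-θ) ≤ Real.exp (-(3 * θ * p)) := Real.exp_le_exp.2 (by nlinarith)
      exact mul_le_mul_of_nonneg_left this (by linarith)
    · have : Real.exp (-(3 * θ * p)) ≤ Real.exp (-θ) := Real.exp_le_exp.2 (by nlinarith)
      exact mul_le_mul_of_nonpos_left this (by linarith)
  calc _ ≤ _ := hw
    _ ≤ (18 / 25 * z - 1 / (1 + z)) * Real.exp (-(3 * θ * p)) :=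
        mul_le_mul_of_nonneg_right hchord (Real.exp_pos _).le
    _ = _ := by ring

/-- The constant multiplying `E[s₃/T₃]` in the bound for `E[log(T₃/T₂)] - log(3/2)`. -/
def kap (d : ℕ) : ℝ := if d = 1 then 18 / 25 else 2 / 5

/-- A majorant for what is left of the left-hand side of `one_dim_ineq` after subtracting the
Frullani difference of `cutWeight`. For `d = 1` the integrand is not pointwise below the required
multiple, so the majorant is only compared with it after integration. -/
lemma exists_majorant {d : ℕ} (hd1 : 1 ≤ d) (hd4 : d ≤ 4) {θ : ℝ} (hθ : 0 ≤ θ) :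
    ∃ k : ℝ → ℝ, Measurable k ∧ (∀ p ∈ Ioo (0 : ℝ) 1, (cutWeight d θ (3 / 2 * p) -
        (1 - p) ^ (3 * (d : ℝ) / 2 - 1) * Real.exp (-(3 * θ * p))) / p ≤ k p) ∧
      ∫⁻ p in Ioo (0 : ℝ) 1, ENNReal.ofReal (k p) ≤ ENNReal.ofReal (kap d * d) *
        ∫⁻ p in Ioo (0 : ℝ) 1,
          ENNReal.ofReal ((1 - p) ^ (3 * (d : ℝ) / 2 - 1) * Real.exp (-(3 * θ * p))) := by
  obtain rfl | hd2 : d = 1 ∨ 2 ≤ d := by omega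
  · refine ⟨fun p => (Ioo (0 : ℝ) (2 / 3)).indicator
      (fun p => Real.exp (-(3 * θ * p)) / (1 + √(1 - p))) p, ?_, ?_, ?_⟩
    · exact Measurable.indicator (by fun_prop) measurableSet_Ioo
    · intro p hp
      rw [rpow_eq_sqrt_pow le_rfl hp.2]
      have hz2 : √(1 - p) ^ 2 = 1 - p := Real.sq_sqrt (by linarith [hp.2])
      have hz0 : 0 ≤ √(1 - p) := Real.sqrt_nonneg _
      set z := √(1 - p)
      simp only [cutWeight]
      by_cases h : p < 2 / 3
      · rw [if_pos (by linarith), indicator_of_mem (show p ∈ Ioo (0 : ℝ) (2 / 3) from ⟨hp.1, h⟩),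
          div_le_div_iff₀ hp.1 (by positivity)]
        have : (2 * θ * (3 / 2 * p)) = 3 * θ * p := by ring
        rw [this]
        have hpz : p = 1 - z ^ 2 := by linarith
        apply le_of_eq
        generalize Real.exp (-(3 * θ * p)) = e
        clear_value z
        subst hpz
        simp only [sub_sub_cancel, Real.sqrt_sq hz0]
        norm_num
        ring
      · rw [if_neg (by linarith), indicator_of_notMem (fun h' => h h'.2)]
        refine div_nonpos_of_nonpos_of_nonneg ?_ hp.1.le
        rw [zero_sub, neg_nonpos]
        positivity
    · have hc : Continuous fun p : ℝ => Real.exp (-(3 * θ * p)) / (1 + √(1 - p)) :=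
        Continuous.div (by fun_prop) (by fun_prop) fun p => by positivity
      have hc2 : Continuous fun p : ℝ => √(1 - p) * Real.exp (-(3 * θ * p)) := by fun_prop
      have e1 : ∀ g : ℝ → ℝ, Continuous g → (∀ p, 0 ≤ g p) →
          ∫⁻ p in Ioo (0 : ℝ) (2 / 3), ENNReal.ofReal (g p) =
            ENNReal.ofReal (∫ p in (0 : ℝ)..(2 / 3), g p) := by
        intro g hg h0
        rw [intervalIntegral.integral_of_le (by norm_num), integral_Ioc_eq_integral_Ioo,
          ofReal_integral_eq_lintegral_ofReal _ (Filter.Eventually.of_forall h0)]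
        exact (hg.integrableOn_Icc (a := 0) (b := 2 / 3)).mono_set Ioo_subset_Icc_self
      calc ∫⁻ p in Ioo (0 : ℝ) 1, ENNReal.ofReal ((Ioo (0 : ℝ) (2 / 3)).indicator
            (fun p => Real.exp (-(3 * θ * p)) / (1 + √(1 - p))) p)
          ≤ ∫⁻ p in Ioo (0 : ℝ) (2 / 3),
              ENNReal.ofReal (Real.exp (-(3 * θ * p)) / (1 + √(1 - p))) := by
            rw [← lintegral_indicator (s := Ioo (0 : ℝ) (2 / 3)) measurableSet_Ioo]
            refine (setLIntegral_le_lintegral _ _).trans (lintegral_mono fun p => ?_)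
            by_cases h : p ∈ Ioo (0 : ℝ) (2 / 3)
            · simp [indicator_of_mem h]
            · simp [indicator_of_notMem h]
        _ = ENNReal.ofReal (∫ p in (0 : ℝ)..(2 / 3), Real.exp (-(3 * θ * p)) / (1 + √(1 - p))) :=
            e1 _ hc fun p => by positivity
        _ ≤ ENNReal.ofReal (18 / 25 * ∫ p in (0 : ℝ)..(2 / 3), √(1 - p) * Real.exp (-(3 * θ * p))) :=
            ENNReal.ofReal_le_ofReal (low_dim_integral hθ)
        _ = ENNReal.ofReal (18 / 25) * ∫⁻ p in Ioo (0 : ℝ) (2 / 3),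
              ENNReal.ofReal (√(1 - p) * Real.exp (-(3 * θ * p))) := by
            rw [ENNReal.ofReal_mul (by norm_num), e1 _ hc2 fun p => by positivity]
        _ ≤ ENNReal.ofReal (18 / 25) * ∫⁻ p in Ioo (0 : ℝ) 1,
              ENNReal.ofReal (√(1 - p) * Real.exp (-(3 * θ * p))) := by
            gcongr
            norm_num
        _ = _ := by
            simp only [kap, if_true, Nat.cast_one, mul_one]
            congr 1
            refine setLIntegral_congr_fun measurableSet_Ioo fun p hp => ?_
            have := rpow_eq_sqrt_pow (le_refl 1) hp.2
            rw [Nat.cast_one, mul_one] at this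
            rw [this]
            norm_num
  · refine ⟨fun p => kap d * d * ((1 - p) ^ (3 * (d : ℝ) / 2 - 1) * Real.exp (-(3 * θ * p))),
      by fun_prop, ?_, ?_⟩
    · intro p hp
      have hk : kap d = 2 / 5 := if_neg (by omega)
      have hz0 : 0 < √(1 - p) := Real.sqrt_pos.2 (by linarith [hp.2])
      have hz2 : √(1 - p) ^ 2 = 1 - p := Real.sq_sqrt (by linarith [hp.2])
      have hz1 : √(1 - p) < 1 := by nlinarith [hp.1]
      simp only [rpow_eq_sqrt_pow hd1 hp.2, hk]
      rw [div_le_iff₀ hp.1, sub_le_iff_le_add]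
      set z := √(1 - p)
      have hpz : p = 1 - z ^ 2 := by linarith
      simp only [cutWeight]
      split_ifs with h
      · have h1 := poly_ineq_high hd2 hd4 hz0 hz1 (by rw [← hpz]; exact h)
        rw [← hpz] at h1
        have : (2 * θ * (3 / 2 * p)) = 3 * θ * p := by ring
        rw [this]
        have := mul_le_mul_of_nonneg_right h1 (Real.exp_pos (-(3 * θ * p))).le
        refine this.trans (le_of_eq ?_)
        ring
      · have := hp.1
        positivity
    · have hk : 0 ≤ kap d * d := by
        have : 0 ≤ kap d := by unfold kap; split_ifs <;> norm_num
        positivity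
      simp_rw [ENNReal.ofReal_mul hk]
      rw [lintegral_const_mul]
      fun_prop

/-- The one-dimensional inequality to which the comparison of `E[log(T₃/T₂)]` with
`log(3/2) + κ E[s₃/T₃]` reduces. -/
lemma one_dim_ineq {d : ℕ} (hd1 : 1 ≤ d) (hd4 : d ≤ 4) {θ : ℝ} (hθ : 0 ≤ θ) :
    ∫⁻ p in Ioo (0 : ℝ) 1, ENNReal.ofReal (((1 - p) ^ ((d : ℝ) - 1) * Real.exp (-(2 * θ * p)) -
        (1 - p) ^ (3 * (d : ℝ) / 2 - 1) * Real.exp (-(3 * θ * p))) / p) ≤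
      ENNReal.ofReal (Real.log (3 / 2)) + ENNReal.ofReal (kap d * d) *
        ∫⁻ p in Ioo (0 : ℝ) 1,
          ENNReal.ofReal ((1 - p) ^ (3 * (d : ℝ) / 2 - 1) * Real.exp (-(3 * θ * p))) := by
  obtain ⟨k, hkm, hk1, hk2⟩ := exists_majorant hd1 hd4 hθ
  have hF := frullani_cutWeight d hθ
  rw [div_one] at hF
  calc _ ≤ ∫⁻ p in Ioo (0 : ℝ) 1, (ENNReal.ofReal ((cutWeight d θ (1 * p) -
          cutWeight d θ (3 / 2 * p)) / p) + ENNReal.ofReal (k p)) := by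
        refine setLIntegral_mono' measurableSet_Ioo fun p hp => ?_
        have h1 := hk1 p hp
        refine le_trans (ENNReal.ofReal_le_ofReal ?_) ENNReal.ofReal_add_le
        have h2 : (1 - p) ^ ((d : ℝ) - 1) * Real.exp (-(2 * θ * p)) = cutWeight d θ (1 * p) := by
          simp only [cutWeight]
          rw [one_mul, if_pos hp.2, ← Nat.cast_pred hd1, Real.rpow_natCast]
        rw [h2]
        refine le_trans (le_of_eq ?_) (add_le_add_right h1 _)
        ring
    _ = (∫⁻ p in Ioo (0 : ℝ) 1, ENNReal.ofReal ((cutWeight d θ (1 * p) -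
          cutWeight d θ (3 / 2 * p)) / p)) + ∫⁻ p in Ioo (0 : ℝ) 1, ENNReal.ofReal (k p) :=
        lintegral_add_right _ (by fun_prop)
    _ ≤ _ := by
        refine add_le_add ?_ hk2
        rw [← hF]
        exact lintegral_mono_set Ioo_subset_Ioi_self

/-! ### Gaussian and chi-square densities -/

lemma gaussPdf_pos (d : ℕ) (z θ : Euc d) {τ : ℝ} (hτ : 0 < τ) : 0 < gaussPdf d z θ τ := by
  unfold gaussPdf
  have := Real.pi_pos
  positivity

lemma gaussPdf_measurable (d : ℕ) {α : Type*} [MeasurableSpace α] {f g : α → Euc d} {h : α → ℝ}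
    (hf : Measurable f) (hg : Measurable g) (hh : Measurable h) :
    Measurable fun a => gaussPdf d (f a) (g a) (h a) := by
  unfold gaussPdf
  fun_prop

lemma integral_gaussPdf (d : ℕ) (θ : Euc d) {τ : ℝ} (hτ : 0 < τ) :
    ∫ z, gaussPdf d z θ τ = 1 := by
  unfold gaussPdf
  rw [integral_const_mul, integral_sub_right_eq_self (fun z : Euc d => Real.exp (-‖z‖ ^ 2 / (2 * τ)))]
  have h := GaussianFourier.integral_rexp_neg_mul_sq_norm (V := Euc d) (b := 1 / (2 * τ))
    (by positivity)
  have h2 : ∀ z : Euc d, Real.exp (-‖z‖ ^ 2 / (2 * τ)) = Real.exp (-(1 / (2 * τ)) * ‖z‖ ^ 2) := by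
    intro z; congr 1; ring
  simp_rw [h2]
  rw [h, finrank_euclideanSpace, Fintype.card_fin]
  have h3 : Real.pi / (1 / (2 * τ)) = 2 * Real.pi * τ := by field_simp
  have hpos : 0 < 2 * Real.pi * τ := by have := Real.pi_pos; positivity
  rw [h3, ← Real.rpow_add hpos]
  have : -(d : ℝ) / 2 + d / 2 = 0 := by ring
  rw [this, Real.rpow_zero]

lemma integrable_gaussPdf (d : ℕ) (θ : Euc d) {τ : ℝ} (hτ : 0 < τ) :
    Integrable fun z => gaussPdf d z θ τ := by
  by_contra h
  have := integral_gaussPdf d θ hτ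
  rw [integral_undef h] at this
  exact zero_ne_one this

lemma integral_sq_norm_exp {d : ℕ} (hd : 1 ≤ d) {b : ℝ} (hb : 0 < b) :
    ∫ z : Euc d, ‖z‖ ^ 2 * Real.exp (-b * ‖z‖ ^ 2) =
      d / (2 * b) * ∫ z : Euc d, Real.exp (-b * ‖z‖ ^ 2) := by
  have : Nonempty (Fin d) := ⟨⟨0, hd⟩⟩
  rw [integral_fun_norm_addHaar volume (fun r => r ^ 2 * Real.exp (-b * r ^ 2)),
    integral_fun_norm_addHaar volume (fun r => Real.exp (-b * r ^ 2))]
  simp only [finrank_euclideanSpace, Fintype.card_fin, nsmul_eq_mul, smul_eq_mul]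
  have hd0 : (0 : ℝ) < d := by exact_mod_cast hd
  have key : ∫ y in Ioi (0 : ℝ), y ^ (d - 1) * (y ^ 2 * Real.exp (-b * y ^ 2)) =
      d / (2 * b) * ∫ y in Ioi (0 : ℝ), y ^ (d - 1) * Real.exp (-b * y ^ 2) := by
    have h1 := integral_rpow_mul_exp_neg_mul_rpow (p := 2) (q := d + 1) (b := b) two_pos
      (by linarith) hb
    have h2 := integral_rpow_mul_exp_neg_mul_rpow (p := 2) (q := d - 1) (b := b) two_pos
      (by linarith) hb
    have e1 : ∫ y in Ioi (0 : ℝ), y ^ (d - 1) * (y ^ 2 * Real.exp (-b * y ^ 2)) =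
        ∫ x in Ioi (0 : ℝ), x ^ ((d : ℝ) + 1) * Real.exp (-b * x ^ (2 : ℝ)) := by
      refine setIntegral_congr_fun measurableSet_Ioi fun x hx => ?_
      have : x ^ ((d : ℝ) + 1) = x ^ (d - 1) * x ^ 2 := by
        rw [← pow_add, ← Real.rpow_natCast]
        congr 1
        push_cast [Nat.cast_sub hd]
        ring
      simp only [this, Real.rpow_two]
      ring
    have e2 : ∫ y in Ioi (0 : ℝ), y ^ (d - 1) * Real.exp (-b * y ^ 2) =
        ∫ x in Ioi (0 : ℝ), x ^ ((d : ℝ) - 1) * Real.exp (-b * x ^ (2 : ℝ)) := by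
      refine setIntegral_congr_fun measurableSet_Ioi fun x hx => ?_
      have : x ^ ((d : ℝ) - 1) = x ^ (d - 1) := by
        rw [← Real.rpow_natCast]
        congr 1
        push_cast [Nat.cast_sub hd]
        ring
      simp only [this, Real.rpow_two]
    rw [e1, e2, h1, h2]
    have g1 : ((d : ℝ) + 1 + 1) / 2 = d / 2 + 1 := by ring
    have g2 : ((d : ℝ) - 1 + 1) / 2 = d / 2 := by ring
    have g3 : -((d : ℝ) + 1 + 1) / 2 = -(d - 1 + 1) / 2 - 1 := by ring
    rw [g1, g2, g3, Real.Gamma_add_one (by positivity), Real.rpow_sub_one hb.ne']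
    field_simp
  rw [key]
  ring

lemma integral_sq_norm_gaussPdf {d : ℕ} (hd : 1 ≤ d) (θ : Euc d) {τ : ℝ} (hτ : 0 < τ) :
    ∫ z, gaussPdf d z θ τ * ‖z - θ‖ ^ 2 = d * τ := by
  have h1 := integral_gaussPdf d θ hτ
  have h2 := integral_sq_norm_exp hd (b := 1 / (2 * τ)) (by positivity)
  have he : ∀ z : Euc d, Real.exp (-‖z‖ ^ 2 / (2 * τ)) = Real.exp (-(1 / (2 * τ)) * ‖z‖ ^ 2) := by
    intro z; congr 1; ring
  unfold gaussPdf at h1 ⊢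
  rw [integral_const_mul,
    integral_sub_right_eq_self (fun z : Euc d => Real.exp (-‖z‖ ^ 2 / (2 * τ)))] at h1
  simp_rw [mul_assoc]
  rw [integral_const_mul, integral_sub_right_eq_self
    (fun z : Euc d => Real.exp (-‖z‖ ^ 2 / (2 * τ)) * ‖z‖ ^ 2)]
  simp_rw [he] at h1 ⊢
  simp_rw [mul_comm (Real.exp _) (_ ^ 2)]
  rw [h2]
  have : (d : ℝ) / (2 * (1 / (2 * τ))) = d * τ := by field_simp
  rw [this]
  have h1' : (2 * Real.pi * τ) ^ (-(d : ℝ) / 2) *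
    ∫ z : Euc d, Real.exp (-(1 / (2 * τ)) * ‖z‖ ^ 2) = 1 := h1
  generalize (∫ z : Euc d, Real.exp (-(1 / (2 * τ)) * ‖z‖ ^ 2)) = I at h1' ⊢
  rw [mul_left_comm, ← mul_assoc 2, h1', mul_one]

lemma integrable_sq_norm_gaussPdf {d : ℕ} (hd : 1 ≤ d) (θ : Euc d) {τ : ℝ} (hτ : 0 < τ) :
    Integrable fun z => gaussPdf d z θ τ * ‖z - θ‖ ^ 2 := by
  by_contra h
  have := integral_sq_norm_gaussPdf hd θ hτ
  rw [integral_undef h] at this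
  have hd0 : (0 : ℝ) < d := by exact_mod_cast hd
  have : 0 < d * τ := by positivity
  linarith

/-- Exponential tilting of a Gaussian density by `exp(-x‖y‖²)` gives a Gaussian density again. -/
lemma gaussPdf_tilt (d : ℕ) (y μ : Euc d) {τ x : ℝ} (hτ : 0 < τ) (hx : 0 < x) :
    gaussPdf d y μ τ * Real.exp (-(x * ‖y‖ ^ 2)) =
      ((1 + 2 * τ * x) ^ (-(d : ℝ) / 2) * Real.exp (-(x * ‖μ‖ ^ 2 / (1 + 2 * τ * x)))) *
        gaussPdf d y ((1 + 2 * τ * x)⁻¹ • μ) (τ / (1 + 2 * τ * x)) := by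
  unfold gaussPdf
  have hc : 0 < 1 + 2 * τ * x := by positivity
  set c := 1 + 2 * τ * x with hcdef
  have hpi := Real.pi_pos
  have h1 : (2 * Real.pi * τ) = c * (2 * Real.pi * (τ / c)) := by field_simp
  have h2 : (2 * Real.pi * τ) ^ (-(d : ℝ) / 2) =
      c ^ (-(d : ℝ) / 2) * (2 * Real.pi * (τ / c)) ^ (-(d : ℝ) / 2) := by
    rw [← Real.mul_rpow hc.le (by positivity), ← h1]
  have h3 : Real.exp (-‖y - μ‖ ^ 2 / (2 * τ)) * Real.exp (-(x * ‖y‖ ^ 2)) =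
      Real.exp (-(x * ‖μ‖ ^ 2 / c)) * Real.exp (-‖y - c⁻¹ • μ‖ ^ 2 / (2 * (τ / c))) := by
    rw [← Real.exp_add, ← Real.exp_add]
    congr 1
    rw [norm_sub_sq_real, norm_sub_sq_real, inner_smul_right, norm_smul, Real.norm_eq_abs,
      abs_of_pos (inv_pos.2 hc)]
    field_simp
    rw [hcdef]
    ring
  rw [h2]
  linear_combination c ^ (-(d : ℝ) / 2) * (2 * Real.pi * (τ / c)) ^ (-(d : ℝ) / 2) * h3

lemma chiSqPdf_eq (d : ℕ) {σ2 s : ℝ} (hσ : 0 < σ2) (hs : 0 < s) :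
    chiSqPdf d (s / σ2) / σ2 = ((1 / (2 * σ2)) ^ ((d : ℝ) / 2) / Real.Gamma (d / 2)) *
      (s ^ ((d : ℝ) / 2 - 1) * Real.exp (-(1 / (2 * σ2) * s))) := by
  unfold chiSqPdf
  rw [Real.div_rpow hs.le hσ.le, Real.div_rpow zero_le_one (by positivity), Real.one_rpow,
    Real.mul_rpow zero_le_two hσ.le, Real.rpow_sub_one hσ.ne']
  have : -(s / σ2) / 2 = -(1 / (2 * σ2) * s) := by field_simp
  rw [this]
  field_simp

lemma chiSqPdf_pos {d : ℕ} (hd : 1 ≤ d) {s : ℝ} (hs : 0 < s) : 0 < chiSqPdf d s := by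
  unfold chiSqPdf
  have hd0 : (0 : ℝ) < d := by exact_mod_cast hd
  have := Real.Gamma_pos_of_pos (show (0 : ℝ) < d / 2 by positivity)
  positivity

lemma chiSqPdf_measurable (k : ℝ) : Measurable (chiSqPdf k) := by
  unfold chiSqPdf
  fun_prop

lemma integrable_rpow_chi {d : ℕ} {σ2 a : ℝ} (hσ : 0 < σ2) (ha : 0 < d / 2 + a) :
    IntegrableOn (fun s => chiSqPdf d (s / σ2) / σ2 * s ^ a) (Ioi 0) := by
  have h := Real.integral_rpow_mul_exp_neg_mul_Ioi (a := d / 2 + a) (r := 1 / (2 * σ2)) ha (by positivity)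
  have h2 : IntegrableOn (fun t : ℝ => t ^ ((d : ℝ) / 2 + a - 1) * Real.exp (-(1 / (2 * σ2) * t)))
      (Ioi 0) := by
    by_contra hc
    rw [integral_undef hc] at h
    have := Real.Gamma_pos_of_pos ha
    have : 0 < (1 / (1 / (2 * σ2))) ^ ((d : ℝ) / 2 + a) * Real.Gamma (d / 2 + a) := by positivity
    linarith
  refine ((h2.const_mul ((1 / (2 * σ2)) ^ ((d : ℝ) / 2) / Real.Gamma (d / 2)))).congr ?_
  refine ae_restrict_of_forall_mem measurableSet_Ioi fun s hs => ?_
  simp only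
  rw [chiSqPdf_eq d hσ hs, show (d : ℝ) / 2 + a - 1 = (d / 2 - 1) + a by ring,
    Real.rpow_add hs]
  ring

lemma integral_chi {d : ℕ} (hd : 1 ≤ d) {σ2 : ℝ} (hσ : 0 < σ2) :
    ∫ s in Ioi (0 : ℝ), chiSqPdf d (s / σ2) / σ2 = 1 := by
  have hd0 : (0 : ℝ) < d := by exact_mod_cast hd
  have h := Real.integral_rpow_mul_exp_neg_mul_Ioi (a := d / 2) (r := 1 / (2 * σ2)) (by positivity)
    (by positivity)
  rw [setIntegral_congr_fun measurableSet_Ioi fun s hs => chiSqPdf_eq d hσ hs, integral_const_mul, h]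
  have := Real.Gamma_pos_of_pos (show (0 : ℝ) < d / 2 by positivity)
  rw [one_div_one_div, Real.div_rpow zero_le_one (by positivity), Real.one_rpow]
  field_simp

lemma integral_chi_mul {d : ℕ} (hd : 1 ≤ d) {σ2 : ℝ} (hσ : 0 < σ2) :
    ∫ s in Ioi (0 : ℝ), chiSqPdf d (s / σ2) / σ2 * s = d * σ2 := by
  have hd0 : (0 : ℝ) < d := by exact_mod_cast hd
  have h := Real.integral_rpow_mul_exp_neg_mul_Ioi (a := d / 2 + 1) (r := 1 / (2 * σ2)) (by positivity)
    (by positivity)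
  have e : ∀ s ∈ Ioi (0 : ℝ), chiSqPdf d (s / σ2) / σ2 * s =
      ((1 / (2 * σ2)) ^ ((d : ℝ) / 2) / Real.Gamma (d / 2)) *
      (s ^ ((d : ℝ) / 2 + 1 - 1) * Real.exp (-(1 / (2 * σ2) * s))) := by
    intro s hs
    rw [chiSqPdf_eq d hσ hs, Real.rpow_sub_one (ne_of_gt hs), add_sub_cancel_right]
    have : s ≠ 0 := ne_of_gt hs
    field_simp
  rw [setIntegral_congr_fun measurableSet_Ioi e, integral_const_mul, h]
  have := Real.Gamma_pos_of_pos (show (0 : ℝ) < d / 2 by positivity)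
  rw [one_div_one_div, Real.div_rpow zero_le_one (by positivity), Real.one_rpow,
    Real.Gamma_add_one (by positivity), Real.rpow_add_one (by positivity)]
  field_simp

lemma chi_tilt (d : ℕ) {σ2 s x : ℝ} (hσ : 0 < σ2) (hs : 0 < s) (hx : 0 < x) :
    chiSqPdf d (s / σ2) / σ2 * Real.exp (-(x * s)) = (1 + 2 * σ2 * x) ^ (-(d : ℝ) / 2) *
      (chiSqPdf d (s / (σ2 / (1 + 2 * σ2 * x))) / (σ2 / (1 + 2 * σ2 * x))) := by
  have hc : 0 < 1 + 2 * σ2 * x := by positivity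
  rw [chiSqPdf_eq d hσ hs, chiSqPdf_eq d (by positivity) hs]
  set c := 1 + 2 * σ2 * x with hcdef
  have h1 : (1 / (2 * (σ2 / c))) = c * (1 / (2 * σ2)) := by field_simp
  have h2 : Real.exp (-(1 / (2 * σ2) * s)) * Real.exp (-(x * s)) =
      Real.exp (-(c * (1 / (2 * σ2)) * s)) := by
    rw [← Real.exp_add]
    congr 1
    rw [hcdef]
    field_simp
    ring
  rw [h1, Real.mul_rpow hc.le (by positivity), ← h2, neg_div, Real.rpow_neg hc.le]
  have : c ^ ((d : ℝ) / 2) ≠ 0 := (Real.rpow_pos_of_pos hc _).ne'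
  field_simp

lemma integrable_log_chi {d : ℕ} (hd : 1 ≤ d) {σ2 : ℝ} (hσ : 0 < σ2) :
    IntegrableOn (fun s => chiSqPdf d (s / σ2) / σ2 * |Real.log s|) (Ioi 0) := by
  have hd1 : (1 : ℝ) ≤ d := by exact_mod_cast hd
  have h1 := integrable_rpow_chi (d := d) (a := 1) hσ (by linarith)
  have h2 := integrable_rpow_chi (d := d) (a := -(1 / 4)) hσ (by linarith)
  refine (h1.add (h2.mul_const 4)).mono' ?_ ?_
  · exact (((chiSqPdf_measurable d).comp (measurable_id.div_const σ2)).div_const σ2 |>.mul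
      (by fun_prop : Measurable fun s : ℝ => |Real.log s|)).aestronglyMeasurable
  · refine ae_restrict_of_forall_mem measurableSet_Ioi fun s hs => ?_
    have hs0 : 0 < s := hs
    have hp : 0 < chiSqPdf d (s / σ2) / σ2 := div_pos (chiSqPdf_pos hd (by positivity)) hσ
    rw [Real.norm_eq_abs, abs_of_nonneg (by positivity), Pi.add_apply, mul_assoc, ← mul_add]
    refine mul_le_mul_of_nonneg_left ?_ hp.le
    rw [Real.rpow_one]
    have hr : 0 < s ^ (-(1 / 4) : ℝ) := by positivity
    rcases le_total 1 s with h | h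
    · rw [abs_of_nonneg (Real.log_nonneg h)]
      have := Real.log_le_sub_one_of_pos hs0
      nlinarith
    · rw [abs_of_nonpos (Real.log_nonpos hs0.le h), ← Real.log_inv]
      have := Real.log_le_rpow_div (inv_nonneg.2 hs0.le) (show (0 : ℝ) < 1 / 4 by norm_num)
      rw [Real.inv_rpow hs0.le, ← Real.rpow_neg hs0.le] at this
      linarith

/-! ### The joint law of `(s, x̄, y)` and the key inequality -/

/-- The Gaussian law with mean `μ` and covariance `τ I_d`, as a measure. -/
def gaussM (d : ℕ) (μ : Euc d) (τ : ℝ) : Measure (Euc d) :=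
  volume.withDensity fun z => ENNReal.ofReal (gaussPdf d z μ τ)

/-- The law of `σ2` times a chi-square variable with `d` degrees of freedom. -/
def chiM (d : ℕ) (σ2 : ℝ) : Measure ℝ :=
  (volume.restrict (Ioi 0)).withDensity fun s => ENNReal.ofReal (chiSqPdf d (s / σ2) / σ2)

instance (d : ℕ) (μ : Euc d) (τ : ℝ) : SFinite (gaussM d μ τ) := by
  unfold gaussM; infer_instance

instance (d : ℕ) (σ2 : ℝ) : SFinite (chiM d σ2) := by
  unfold chiM; infer_instance

/-- The joint law of `(s, x̄, y)` for sample size two. -/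
def jointM (d : ℕ) (μ : Euc d) (σ2 : ℝ) : Measure (ℝ × Euc d × Euc d) :=
  (chiM d σ2).prod ((gaussM d μ (σ2 / 2)).prod (gaussM d μ σ2))

lemma gaussPdf_measurable' (d : ℕ) (μ : Euc d) (τ : ℝ) :
    Measurable fun z => ENNReal.ofReal (gaussPdf d z μ τ) :=
  (gaussPdf_measurable d measurable_id measurable_const measurable_const).ennreal_ofReal

lemma chi_measurable' (d : ℕ) (σ2 : ℝ) :
    Measurable fun s => ENNReal.ofReal (chiSqPdf d (s / σ2) / σ2) :=
  (((chiSqPdf_measurable d).comp (measurable_id.div_const σ2)).div_const σ2).ennreal_ofReal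

lemma isProbabilityMeasure_gaussM (d : ℕ) (μ : Euc d) {τ : ℝ} (hτ : 0 < τ) :
    IsProbabilityMeasure (gaussM d μ τ) := by
  refine ⟨?_⟩
  rw [gaussM, withDensity_apply _ MeasurableSet.univ, Measure.restrict_univ,
    ← ofReal_integral_eq_lintegral_ofReal (integrable_gaussPdf d μ hτ)
      (ae_of_all _ fun z => (gaussPdf_pos d z μ hτ).le), integral_gaussPdf d μ hτ, ENNReal.ofReal_one]

lemma chi_nonneg {d : ℕ} (hd : 1 ≤ d) {σ2 s : ℝ} (hσ : 0 < σ2) (hs : s ∈ Ioi (0 : ℝ)) :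
    0 ≤ chiSqPdf d (s / σ2) / σ2 :=
  (div_pos (chiSqPdf_pos hd (div_pos hs hσ)) hσ).le

lemma isProbabilityMeasure_chiM {d : ℕ} (hd : 1 ≤ d) {σ2 : ℝ} (hσ : 0 < σ2) :
    IsProbabilityMeasure (chiM d σ2) := by
  refine ⟨?_⟩
  have hi : IntegrableOn (fun s => chiSqPdf d (s / σ2) / σ2) (Ioi 0) := by
    have hd0 : (0 : ℝ) < d := by exact_mod_cast hd
    simpa using integrable_rpow_chi (d := d) (a := 0) hσ (by positivity)
  rw [chiM, withDensity_apply _ MeasurableSet.univ, Measure.restrict_univ,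
    ← ofReal_integral_eq_lintegral_ofReal hi
      (ae_restrict_of_forall_mem measurableSet_Ioi fun s hs => chi_nonneg hd hσ hs),
    integral_chi hd hσ, ENNReal.ofReal_one]

lemma isProbabilityMeasure_jointM {d : ℕ} (hd : 1 ≤ d) (μ : Euc d) {σ2 : ℝ} (hσ : 0 < σ2) :
    IsProbabilityMeasure (jointM d μ σ2) := by
  have := isProbabilityMeasure_chiM hd hσ
  have := isProbabilityMeasure_gaussM d μ hσ
  have := isProbabilityMeasure_gaussM d μ (half_pos hσ)
  unfold jointM
  infer_instance

lemma ae_jointM_pos (d : ℕ) (μ : Euc d) (σ2 : ℝ) : ∀ᵐ w ∂(jointM d μ σ2), 0 < w.1 := by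
  have h : ∀ᵐ s ∂(chiM d σ2), 0 < s :=
    (withDensity_absolutelyContinuous _ _).ae_le (ae_restrict_mem measurableSet_Ioi)
  exact Measure.quasiMeasurePreserving_fst.ae h

lemma gaussM_tilt (d : ℕ) (μ : Euc d) {τ x : ℝ} (hτ : 0 < τ) (hx : 0 < x) :
    (gaussM d μ τ).withDensity (fun y => ENNReal.ofReal (Real.exp (-(x * ‖y‖ ^ 2)))) =
      ENNReal.ofReal ((1 + 2 * τ * x) ^ (-(d : ℝ) / 2) *
        Real.exp (-(x * ‖μ‖ ^ 2 / (1 + 2 * τ * x)))) •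
        gaussM d ((1 + 2 * τ * x)⁻¹ • μ) (τ / (1 + 2 * τ * x)) := by
  unfold gaussM
  rw [← withDensity_mul _ (gaussPdf_measurable' _ _ _) (by fun_prop),
    ← withDensity_smul _ (gaussPdf_measurable' _ _ _)]
  congr 1
  ext y
  have hc : 0 < 1 + 2 * τ * x := by positivity
  simp only [Pi.mul_apply, Pi.smul_apply, smul_eq_mul]
  rw [← ENNReal.ofReal_mul (gaussPdf_pos d _ _ hτ).le, gaussPdf_tilt d y μ hτ hx,
    ENNReal.ofReal_mul (by positivity)]

lemma chiM_tilt {d : ℕ} (hd : 1 ≤ d) {σ2 x : ℝ} (hσ : 0 < σ2) (hx : 0 < x) :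
    (chiM d σ2).withDensity (fun s => ENNReal.ofReal (Real.exp (-(x * s)))) =
      ENNReal.ofReal ((1 + 2 * σ2 * x) ^ (-(d : ℝ) / 2)) • chiM d (σ2 / (1 + 2 * σ2 * x)) := by
  unfold chiM
  rw [← withDensity_mul _ (chi_measurable' _ _) (by fun_prop),
    ← withDensity_smul _ (chi_measurable' _ _)]
  refine withDensity_congr_ae (ae_restrict_of_forall_mem measurableSet_Ioi fun s hs => ?_)
  have hc : 0 < 1 + 2 * σ2 * x := by positivity
  simp only [Pi.mul_apply, Pi.smul_apply, smul_eq_mul]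
  rw [← ENNReal.ofReal_mul (chi_nonneg hd hσ hs), chi_tilt d hσ hs hx,
    ENNReal.ofReal_mul (by positivity)]

/-- `T₂ = s + 2‖x̄‖²`. -/
def T2 {d : ℕ} (w : ℝ × Euc d × Euc d) : ℝ := w.1 + 2 * ‖w.2.1‖ ^ 2

/-- `s₃ = s + (2/3)‖y - x̄‖²`. -/
def S3 {d : ℕ} (w : ℝ × Euc d × Euc d) : ℝ := w.1 + 2 / 3 * ‖w.2.2 - w.2.1‖ ^ 2

/-- `T₃ = T₂ + ‖y‖²`, which is also `s₃ + 3‖x̄₃‖²` with `x̄₃ = (2x̄ + y)/3`. -/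
def T3 {d : ℕ} (w : ℝ × Euc d × Euc d) : ℝ := w.1 + 2 * ‖w.2.1‖ ^ 2 + ‖w.2.2‖ ^ 2

lemma measurable_T2 {d : ℕ} : Measurable (T2 (d := d)) := by unfold T2; fun_prop
lemma measurable_S3 {d : ℕ} : Measurable (S3 (d := d)) := by unfold S3; fun_prop
lemma measurable_T3 {d : ℕ} : Measurable (T3 (d := d)) := by unfold T3; fun_prop

/-- The joint law is an exponential family in `T₃`: tilting by `exp(-x T₃)` only changes the
parameters. -/
lemma jointM_tilt3 {d : ℕ} (hd : 1 ≤ d) (μ : Euc d) {σ2 x : ℝ} (hσ : 0 < σ2) (hx : 0 < x) :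
    (jointM d μ σ2).withDensity (fun w => ENNReal.ofReal (Real.exp (-(x * T3 w)))) =
      ENNReal.ofReal ((1 + 2 * σ2 * x) ^ (-(3 * (d : ℝ) / 2)) *
        Real.exp (-(3 * x * ‖μ‖ ^ 2 / (1 + 2 * σ2 * x)))) •
        jointM d ((1 + 2 * σ2 * x)⁻¹ • μ) (σ2 / (1 + 2 * σ2 * x)) := by
  have hc : 0 < 1 + 2 * σ2 * x := by positivity
  have h1 := chiM_tilt hd hσ hx
  have h2 := gaussM_tilt d μ (half_pos hσ) (mul_pos two_pos hx)
  have h3 := gaussM_tilt d μ hσ hx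
  rw [show 1 + 2 * (σ2 / 2) * (2 * x) = 1 + 2 * σ2 * x by ring] at h2
  set c := 1 + 2 * σ2 * x with hcdef
  unfold jointM
  have e : (fun w : ℝ × Euc d × Euc d => ENNReal.ofReal (Real.exp (-(x * T3 w)))) =
      fun w => ENNReal.ofReal (Real.exp (-(x * w.1))) *
        (ENNReal.ofReal (Real.exp (-(2 * x * ‖w.2.1‖ ^ 2))) *
          ENNReal.ofReal (Real.exp (-(x * ‖w.2.2‖ ^ 2)))) := by
    ext w
    rw [← ENNReal.ofReal_mul (Real.exp_pos _).le, ← ENNReal.ofReal_mul (Real.exp_pos _).le,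
      ← Real.exp_add, ← Real.exp_add]
    unfold T3
    congr 2
    ring
  rw [e, ← prod_withDensity (f := fun s => ENNReal.ofReal (Real.exp (-(x * s))))
    (g := fun z : Euc d × Euc d => (ENNReal.ofReal (Real.exp (-(2 * x * ‖z.1‖ ^ 2))) *
          ENNReal.ofReal (Real.exp (-(x * ‖z.2‖ ^ 2))))) (by fun_prop) (by fun_prop),
    ← prod_withDensity (f := fun z : Euc d => ENNReal.ofReal (Real.exp (-(2 * x * ‖z‖ ^ 2))))
      (g := fun z : Euc d => ENNReal.ofReal (Real.exp (-(x * ‖z‖ ^ 2)))) (by fun_prop) (by fun_prop),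
    h1, h2, h3, Measure.prod_smul_left, Measure.prod_smul_right, Measure.prod_smul_left,
    Measure.prod_smul_right, Measure.prod_smul_right, smul_smul, smul_smul,
    ← ENNReal.ofReal_mul (by positivity), ← ENNReal.ofReal_mul (by positivity)]
  congr 1
  · congr 1
    have e1 : c ^ (-(3 * (d : ℝ) / 2)) = c ^ (-(d : ℝ) / 2) * c ^ (-(d : ℝ) / 2) * c ^ (-(d : ℝ) / 2) := by
      rw [← Real.rpow_add hc, ← Real.rpow_add hc]; congr 1; ring
    have e2 : Real.exp (-(3 * x * ‖μ‖ ^ 2 / c)) =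
      Real.exp (-(2 * x * ‖μ‖ ^ 2 / c)) * Real.exp (-(x * ‖μ‖ ^ 2 / c)) := by
      rw [← Real.exp_add]; congr 1; ring
    rw [e1, e2]
    ring
  · rw [div_right_comm]

lemma lintegral_exp_T3 {d : ℕ} (hd : 1 ≤ d) (μ : Euc d) {σ2 x : ℝ} (hσ : 0 < σ2) (hx : 0 < x) :
    ∫⁻ w, ENNReal.ofReal (Real.exp (-(x * T3 w))) ∂(jointM d μ σ2) =
      ENNReal.ofReal ((1 + 2 * σ2 * x) ^ (-(3 * (d : ℝ) / 2)) *
        Real.exp (-(3 * x * ‖μ‖ ^ 2 / (1 + 2 * σ2 * x)))) := by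
  have h := congrArg (fun m => m univ) (jointM_tilt3 hd μ hσ hx)
  have := isProbabilityMeasure_jointM hd ((1 + 2 * σ2 * x)⁻¹ • μ)
    (σ2 := σ2 / (1 + 2 * σ2 * x)) (by positivity)
  simpa [withDensity_apply] using h

lemma lintegral_exp_T2 {d : ℕ} (hd : 1 ≤ d) (μ : Euc d) {σ2 x : ℝ} (hσ : 0 < σ2) (hx : 0 < x) :
    ∫⁻ w, ENNReal.ofReal (Real.exp (-(x * T2 w))) ∂(jointM d μ σ2) =
      ENNReal.ofReal ((1 + 2 * σ2 * x) ^ (-(d : ℝ)) *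
        Real.exp (-(2 * x * ‖μ‖ ^ 2 / (1 + 2 * σ2 * x)))) := by
  have hc : 0 < 1 + 2 * σ2 * x := by positivity
  have h1 := congrArg (fun m => m univ) (chiM_tilt hd hσ hx)
  have h2 := congrArg (fun m => m univ) (gaussM_tilt d μ (half_pos hσ) (mul_pos two_pos hx))
  rw [show 1 + 2 * (σ2 / 2) * (2 * x) = 1 + 2 * σ2 * x by ring] at h2
  have := isProbabilityMeasure_chiM hd (σ2 := σ2 / (1 + 2 * σ2 * x)) (by positivity)
  have := isProbabilityMeasure_gaussM d ((1 + 2 * σ2 * x)⁻¹ • μ)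
    (τ := σ2 / 2 / (1 + 2 * σ2 * x)) (by positivity)
  have := isProbabilityMeasure_gaussM d μ hσ
  simp only [withDensity_apply _ MeasurableSet.univ, Measure.restrict_univ, Measure.smul_apply,
    measure_univ, smul_eq_mul, mul_one] at h1 h2
  set c := 1 + 2 * σ2 * x with hcdef
  have e : (fun w : ℝ × Euc d × Euc d => ENNReal.ofReal (Real.exp (-(x * T2 w)))) =
      fun w => ENNReal.ofReal (Real.exp (-(x * w.1))) *
        (ENNReal.ofReal (Real.exp (-(2 * x * ‖w.2.1‖ ^ 2))) * 1) := by
    ext w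
    rw [mul_one, ← ENNReal.ofReal_mul (Real.exp_pos _).le, ← Real.exp_add]
    unfold T2
    congr 2
    ring
  rw [e]
  unfold jointM
  rw [lintegral_prod_mul (f := fun s => ENNReal.ofReal (Real.exp (-(x * s))))
    (g := fun z : Euc d × Euc d => (ENNReal.ofReal (Real.exp (-(2 * x * ‖z.1‖ ^ 2))) * 1))
    (by fun_prop) (by fun_prop),
    lintegral_prod_mul (f := fun z : Euc d => ENNReal.ofReal (Real.exp (-(2 * x * ‖z‖ ^ 2))))
    (g := fun z : Euc d => (1 : ENNReal)) (by fun_prop) (by fun_prop), h1, h2, lintegral_one,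
    measure_univ, mul_one, ← ENNReal.ofReal_mul (by positivity)]
  congr 1
  have e1 : c ^ (-(d : ℝ)) = c ^ (-(d : ℝ) / 2) * c ^ (-(d : ℝ) / 2) := by
    rw [← Real.rpow_add hc]; congr 1; ring
  rw [e1]
  ring

lemma lintegral_sq_gaussM {d : ℕ} (hd : 1 ≤ d) (μ : Euc d) {τ : ℝ} (hτ : 0 < τ) :
    ∫⁻ y, ENNReal.ofReal (‖y - μ‖ ^ 2) ∂(gaussM d μ τ) = ENNReal.ofReal (d * τ) := by
  unfold gaussM
  rw [lintegral_withDensity_eq_lintegral_mul _ (gaussPdf_measurable' _ _ _) (by fun_prop),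
    ← integral_sq_norm_gaussPdf hd μ hτ, ofReal_integral_eq_lintegral_ofReal
      (integrable_sq_norm_gaussPdf hd μ hτ)
      (ae_of_all _ fun z => mul_nonneg (gaussPdf_pos d z μ hτ).le (sq_nonneg _))]
  refine lintegral_congr fun y => ?_
  rw [Pi.mul_apply, ENNReal.ofReal_mul (gaussPdf_pos d y μ hτ).le]

/-- The reflection `y ↦ 2μ - y` preserves the Gaussian law, so the cross term averages out. -/
lemma lintegral_sq_sub_gaussM {d : ℕ} (hd : 1 ≤ d) (μ z : Euc d) {τ : ℝ} (hτ : 0 < τ) :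
    ∫⁻ y, ENNReal.ofReal (‖y - z‖ ^ 2) ∂(gaussM d μ τ) =
      ENNReal.ofReal (d * τ) + ENNReal.ofReal (‖z - μ‖ ^ 2) := by
  have := isProbabilityMeasure_gaussM d μ hτ
  have hrefl : ∫⁻ y, ENNReal.ofReal (‖y - z‖ ^ 2) ∂(gaussM d μ τ) =
      ∫⁻ y, ENNReal.ofReal (‖(y - μ) + (z - μ)‖ ^ 2) ∂(gaussM d μ τ) := by
    unfold gaussM
    rw [lintegral_withDensity_eq_lintegral_mul _ (gaussPdf_measurable' _ _ _) (by fun_prop),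
      lintegral_withDensity_eq_lintegral_mul _ (gaussPdf_measurable' _ _ _) (by fun_prop),
      ← lintegral_sub_left_eq_self _ (μ + μ)]
    refine lintegral_congr fun y => ?_
    simp only [Pi.mul_apply]
    congr 2
    · unfold gaussPdf
      rw [show μ + μ - y - μ = -(y - μ) by abel, norm_neg]
    · rw [show μ + μ - y - z = -((y - μ) + (z - μ)) by abel, norm_neg]
  have hsum : 2 * ∫⁻ y, ENNReal.ofReal (‖y - z‖ ^ 2) ∂(gaussM d μ τ) =
      2 * (ENNReal.ofReal (d * τ) + ENNReal.ofReal (‖z - μ‖ ^ 2)) := by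
    rw [two_mul]
    nth_rewrite 2 [hrefl]
    rw [← lintegral_add_left (by fun_prop), ← lintegral_sq_gaussM hd μ hτ,
      ← mul_one (ENNReal.ofReal (‖z - μ‖ ^ 2)), ← measure_univ (μ := gaussM d μ τ), ← lintegral_const,
      ← lintegral_add_left (by fun_prop), ← lintegral_const_mul _ (by fun_prop)]
    refine lintegral_congr fun y => ?_
    rw [← ENNReal.ofReal_add (by positivity) (by positivity),
      ← ENNReal.ofReal_add (by positivity) (by positivity), two_mul,
      ← ENNReal.ofReal_add (by positivity) (by positivity)]
    congr 1
    have := parallelogram_law_with_norm ℝ (y - μ) (z - μ)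
    rw [show y - μ - (z - μ) = y - z by abel] at this
    nlinarith
  exact (ENNReal.mul_right_inj two_ne_zero ENNReal.ofNat_ne_top).1 hsum

lemma lintegral_chiM_id {d : ℕ} (hd : 1 ≤ d) {σ2 : ℝ} (hσ : 0 < σ2) :
    ∫⁻ s, ENNReal.ofReal s ∂(chiM d σ2) = ENNReal.ofReal (d * σ2) := by
  have hd0 : (0 : ℝ) < d := by exact_mod_cast hd
  have hi : IntegrableOn (fun s => chiSqPdf d (s / σ2) / σ2 * s) (Ioi 0) := by
    simpa using integrable_rpow_chi (d := d) (a := 1) hσ (by positivity)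
  unfold chiM
  rw [lintegral_withDensity_eq_lintegral_mul _ (chi_measurable' _ _) (by fun_prop),
    ← integral_chi_mul hd hσ, ofReal_integral_eq_lintegral_ofReal hi
      (ae_restrict_of_forall_mem measurableSet_Ioi fun s hs =>
        mul_nonneg (chi_nonneg hd hσ hs) (le_of_lt hs))]
  refine setLIntegral_congr_fun measurableSet_Ioi fun s hs => ?_
  simp only [Pi.mul_apply]
  rw [ENNReal.ofReal_mul (chi_nonneg hd hσ hs)]

lemma lintegral_S3 {d : ℕ} (hd : 1 ≤ d) (μ : Euc d) {σ2 : ℝ} (hσ : 0 < σ2) :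
    ∫⁻ w, ENNReal.ofReal (S3 w) ∂(jointM d μ σ2) = ENNReal.ofReal (2 * d * σ2) := by
  have := isProbabilityMeasure_chiM hd hσ
  have := isProbabilityMeasure_gaussM d μ hσ
  have := isProbabilityMeasure_gaussM d μ (half_pos hσ)
  have e : ∀ᵐ w ∂(jointM d μ σ2), ENNReal.ofReal (S3 w) = ENNReal.ofReal w.1 +
      ENNReal.ofReal (2 / 3) * ENNReal.ofReal (‖w.2.2 - w.2.1‖ ^ 2) := by
    filter_upwards [ae_jointM_pos d μ σ2] with w hw
    unfold S3
    rw [ENNReal.ofReal_add hw.le (by positivity), ENNReal.ofReal_mul (by norm_num)]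
  rw [lintegral_congr_ae e]
  rw [lintegral_add_left (by fun_prop), lintegral_const_mul _ (by fun_prop)]
  unfold jointM
  rw [lintegral_prod _ (by fun_prop), lintegral_prod _ (by fun_prop)]
  simp only [lintegral_const, measure_univ, mul_one]
  rw [lintegral_prod _ (by fun_prop), lintegral_chiM_id hd hσ]
  simp_rw [lintegral_sq_sub_gaussM hd μ _ hσ]
  rw [lintegral_add_left (by fun_prop), lintegral_sq_gaussM hd μ (half_pos hσ), lintegral_const,
    measure_univ, mul_one, ← ENNReal.ofReal_add (by positivity) (by positivity),
    ← ENNReal.ofReal_mul (by norm_num), ← ENNReal.ofReal_add (by positivity) (by positivity)]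
  congr 1
  ring

/-- The substitution `x = p/(2σ²(1-p))`. -/
lemma lintegral_Ioi_subst {σ2 : ℝ} (hσ : 0 < σ2) (g : ℝ → ENNReal) :
    ∫⁻ x in Ioi (0 : ℝ), g x = ∫⁻ p in Ioo (0 : ℝ) 1,
      ENNReal.ofReal (1 / (2 * σ2 * (1 - p) ^ 2)) * g (p / (2 * σ2 * (1 - p))) := by
  have himg : (fun p : ℝ => p / (2 * σ2 * (1 - p))) '' Ioo 0 1 = Ioi 0 := by
    ext x
    simp only [mem_image, mem_Ioo, mem_Ioi]
    constructor
    · rintro ⟨p, ⟨h0, h1⟩, rfl⟩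
      have : 0 < 1 - p := by linarith
      positivity
    · intro hx
      have hc : 0 < 1 + 2 * σ2 * x := by positivity
      refine ⟨2 * σ2 * x / (1 + 2 * σ2 * x), ⟨by positivity, ?_⟩, ?_⟩
      · rw [div_lt_one hc]; linarith
      · have : 1 - 2 * σ2 * x / (1 + 2 * σ2 * x) = 1 / (1 + 2 * σ2 * x) := by field_simp; ring
        rw [this]
        field_simp
  have hder : ∀ p ∈ Ioo (0 : ℝ) 1, HasDerivWithinAt (fun p : ℝ => p / (2 * σ2 * (1 - p)))
      (1 / (2 * σ2 * (1 - p) ^ 2)) (Ioo 0 1) p := by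
    intro p hp
    have h1 : (1 - p) ≠ 0 := by have := hp.2; linarith
    have h2 : HasDerivAt (fun p : ℝ => 2 * σ2 * (1 - p)) (2 * σ2 * (0 - 1)) p :=
      ((hasDerivAt_const p (1 : ℝ)).sub (hasDerivAt_id p)).const_mul _
    have h3 := (hasDerivAt_id p).div h2 (by positivity)
    refine (h3.congr_deriv ?_).hasDerivWithinAt
    simp only [id]
    field_simp
    ring
  have hinj : InjOn (fun p : ℝ => p / (2 * σ2 * (1 - p))) (Ioo 0 1) := by
    intro p hp r hr h
    have h1 : (1 - p) ≠ 0 := by have := hp.2; linarith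
    have h2 : (1 - r) ≠ 0 := by have := hr.2; linarith
    simp only at h
    field_simp at h
    linarith
  rw [← himg, lintegral_image_eq_lintegral_abs_deriv_mul measurableSet_Ioo hder hinj]
  refine setLIntegral_congr_fun measurableSet_Ioo fun p hp => ?_
  have h1 : 0 < (1 - p) := by have := hp.2; linarith
  rw [abs_of_pos (by positivity)]

/-- `log(T₃/T₂)` is the Frullani integral of `(e^{-x T₂} - e^{-x T₃})/x`; taking expectations leaves
Laplace transforms, and `p = 2σ²x/(1 + 2σ²x)` maps the range of `x` to `(0,1)`. -/
lemma lintegral_log_T {d : ℕ} (hd : 1 ≤ d) (μ : Euc d) {σ2 : ℝ} (hσ : 0 < σ2) :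
    ∫⁻ w, ENNReal.ofReal (Real.log (T3 w / T2 w)) ∂(jointM d μ σ2) =
      ∫⁻ p in Ioo (0 : ℝ) 1, ENNReal.ofReal
        (((1 - p) ^ ((d : ℝ) - 1) * Real.exp (-(2 * (‖μ‖ ^ 2 / (2 * σ2)) * p)) -
          (1 - p) ^ (3 * (d : ℝ) / 2 - 1) * Real.exp (-(3 * (‖μ‖ ^ 2 / (2 * σ2)) * p))) / p) := by
  have := isProbabilityMeasure_jointM hd μ hσ
  have hT2m := measurable_T2 (d := d)
  have hT3m := measurable_T3 (d := d)
  have hF : ∀ᵐ w ∂(jointM d μ σ2), ENNReal.ofReal (Real.log (T3 w / T2 w)) =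
      ∫⁻ x in Ioi (0 : ℝ), ENNReal.ofReal
        ((Real.exp (-(x * T2 w)) - Real.exp (-(x * T3 w))) / x) := by
    filter_upwards [ae_jointM_pos d μ σ2] with w hw
    have h2 : 0 < T2 w := by unfold T2; positivity
    have h23 : T2 w ≤ T3 w := by unfold T2 T3; linarith [sq_nonneg ‖w.2.2‖]
    rw [← frullani_lintegral (f := fun x => Real.exp (-x)) _ (by fun_prop) _ _ h2 h23]
    · simp_rw [mul_comm (T2 w), mul_comm (T3 w)]
    · intro a _ b _ hab
      exact Real.exp_le_exp.2 (by linarith)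
    · have : ContinuousAt (fun x : ℝ => Real.exp (-x)) 0 := by fun_prop
      have h := this.tendsto
      simp only [neg_zero, Real.exp_zero] at h
      exact h.mono_left nhdsWithin_le_nhds
    · exact Real.tendsto_exp_neg_atTop_nhds_zero
  rw [lintegral_congr_ae hF, lintegral_lintegral_swap (by fun_prop)]
  have hin : ∀ x ∈ Ioi (0 : ℝ), ∫⁻ w, ENNReal.ofReal
        ((Real.exp (-(x * T2 w)) - Real.exp (-(x * T3 w))) / x) ∂(jointM d μ σ2) =
      ENNReal.ofReal (((1 + 2 * σ2 * x) ^ (-(d : ℝ)) *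
        Real.exp (-(2 * x * ‖μ‖ ^ 2 / (1 + 2 * σ2 * x))) -
        (1 + 2 * σ2 * x) ^ (-(3 * (d : ℝ) / 2)) *
        Real.exp (-(3 * x * ‖μ‖ ^ 2 / (1 + 2 * σ2 * x)))) / x) := by
    intro x hx
    have hx0 : 0 < x := hx
    have hc : 0 < 1 + 2 * σ2 * x := by positivity
    simp_rw [div_eq_mul_inv _ x, mul_comm _ x⁻¹, ENNReal.ofReal_mul (inv_nonneg.2 hx0.le)]
    rw [lintegral_const_mul _ (by fun_prop)]
    congr 1
    simp_rw [ENNReal.ofReal_sub _ (Real.exp_pos _).le]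
    rw [ENNReal.ofReal_sub _ (by positivity), lintegral_sub (by fun_prop), lintegral_exp_T2 hd μ hσ hx,
      lintegral_exp_T3 hd μ hσ hx]
    · rw [lintegral_exp_T3 hd μ hσ hx]; exact ENNReal.ofReal_ne_top
    · refine ae_of_all _ fun w => ENNReal.ofReal_le_ofReal (Real.exp_le_exp.2 ?_)
      have h23 : T2 w ≤ T3 w := by unfold T2 T3; linarith [sq_nonneg ‖w.2.2‖]
      nlinarith
  rw [setLIntegral_congr_fun measurableSet_Ioi hin, lintegral_Ioi_subst hσ]
  refine setLIntegral_congr_fun measurableSet_Ioo fun p hp => ?_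
  have h1 : 0 < (1 - p) := by have := hp.2; linarith
  have hp0 : 0 < p := hp.1
  rw [← ENNReal.ofReal_mul (by positivity)]
  congr 1
  have hc : 1 + 2 * σ2 * (p / (2 * σ2 * (1 - p))) = (1 - p)⁻¹ := by field_simp; ring
  have e2 : 2 * (p / (2 * σ2 * (1 - p))) * ‖μ‖ ^ 2 / (1 - p)⁻¹ = 2 * (‖μ‖ ^ 2 / (2 * σ2)) * p := by
    field_simp
  have e3 : 3 * (p / (2 * σ2 * (1 - p))) * ‖μ‖ ^ 2 / (1 - p)⁻¹ = 3 * (‖μ‖ ^ 2 / (2 * σ2)) * p := by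
    field_simp
  rw [hc, e2, e3, Real.inv_rpow h1.le, Real.inv_rpow h1.le, ← Real.rpow_neg h1.le,
    ← Real.rpow_neg h1.le, neg_neg, neg_neg, Real.rpow_sub_one h1.ne', Real.rpow_sub_one h1.ne']
  field_simp

/-- Writing `1/T₃ = ∫ e^{-x T₃} dx` and tilting the joint law, only the mean of `s₃`, which is
`2dσ²` at variance `σ²`, enters. -/
lemma lintegral_ratio {d : ℕ} (hd : 1 ≤ d) (μ : Euc d) {σ2 : ℝ} (hσ : 0 < σ2) :
    ∫⁻ w, ENNReal.ofReal (S3 w / T3 w) ∂(jointM d μ σ2) =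
      ENNReal.ofReal d * ∫⁻ p in Ioo (0 : ℝ) 1, ENNReal.ofReal
        ((1 - p) ^ (3 * (d : ℝ) / 2 - 1) * Real.exp (-(3 * (‖μ‖ ^ 2 / (2 * σ2)) * p))) := by
  have := isProbabilityMeasure_jointM hd μ hσ
  have hS3m := measurable_S3 (d := d)
  have hT3m := measurable_T3 (d := d)
  have hF : ∀ᵐ w ∂(jointM d μ σ2), ENNReal.ofReal (S3 w / T3 w) =
      ∫⁻ x in Ioi (0 : ℝ), ENNReal.ofReal (Real.exp (-(x * T3 w))) * ENNReal.ofReal (S3 w) := by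
    filter_upwards [ae_jointM_pos d μ σ2] with w hw
    have h3 : 0 < T3 w := by unfold T3; positivity
    have hs3 : 0 < S3 w := by unfold S3; positivity
    rw [lintegral_mul_const _ (by fun_prop), div_eq_inv_mul, ENNReal.ofReal_mul (by positivity)]
    congr 1
    have hintg : IntegrableOn (fun x => Real.exp (-(x * T3 w))) (Ioi 0) := by
      simpa [mul_comm] using exp_neg_integrableOn_Ioi 0 h3
    rw [← ofReal_integral_eq_lintegral_ofReal hintg (ae_of_all _ fun x => (Real.exp_pos _).le)]
    congr 1
    have h := integral_exp_mul_Ioi (a := -T3 w) (by linarith) 0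
    simp only [mul_zero, Real.exp_zero] at h
    rw [setIntegral_congr_fun measurableSet_Ioi
      (g := fun x => Real.exp (-T3 w * x)) (fun x _ => by simp only; congr 1; ring), h]
    field_simp
  rw [lintegral_congr_ae hF, lintegral_lintegral_swap (by fun_prop)]
  have hin : ∀ x ∈ Ioi (0 : ℝ), ∫⁻ w, ENNReal.ofReal (Real.exp (-(x * T3 w))) *
        ENNReal.ofReal (S3 w) ∂(jointM d μ σ2) =
      ENNReal.ofReal ((1 + 2 * σ2 * x) ^ (-(3 * (d : ℝ) / 2)) *
        Real.exp (-(3 * x * ‖μ‖ ^ 2 / (1 + 2 * σ2 * x))) *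
        (2 * d * (σ2 / (1 + 2 * σ2 * x)))) := by
    intro x hx
    have hx0 : 0 < x := hx
    have hc : 0 < 1 + 2 * σ2 * x := by positivity
    have h := jointM_tilt3 hd μ hσ hx
    rw [ENNReal.ofReal_mul (by positivity), ← lintegral_S3 hd ((1 + 2 * σ2 * x)⁻¹ • μ)
      (σ2 := σ2 / (1 + 2 * σ2 * x)) (by positivity), ← smul_eq_mul, ← lintegral_smul_measure, ← h,
      lintegral_withDensity_eq_lintegral_mul _ (by fun_prop) (by fun_prop)]
    rfl
  rw [setLIntegral_congr_fun measurableSet_Ioi hin, lintegral_Ioi_subst hσ,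
    ← lintegral_const_mul _ (by fun_prop)]
  refine setLIntegral_congr_fun measurableSet_Ioo fun p hp => ?_
  have h1 : 0 < (1 - p) := by have := hp.2; linarith
  have hp0 : 0 < p := hp.1
  rw [← ENNReal.ofReal_mul (by positivity), ← ENNReal.ofReal_mul (by positivity)]
  congr 1
  have hc : 1 + 2 * σ2 * (p / (2 * σ2 * (1 - p))) = (1 - p)⁻¹ := by field_simp; ring
  have e3 : 3 * (p / (2 * σ2 * (1 - p))) * ‖μ‖ ^ 2 / (1 - p)⁻¹ = 3 * (‖μ‖ ^ 2 / (2 * σ2)) * p := by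
    field_simp
  rw [hc, e3, Real.inv_rpow h1.le, ← Real.rpow_neg h1.le, neg_neg, Real.rpow_sub_one h1.ne']
  field_simp

/-- The risk inequality, in the form in which it is used: the expected logarithmic growth of
`T₃/T₂` exceeds its limiting value `log (3/2)` by at most a multiple of `E[s₃/T₃]`. -/
lemma key_lintegral {d : ℕ} (hd1 : 1 ≤ d) (hd4 : d ≤ 4) (μ : Euc d) {σ2 : ℝ} (hσ : 0 < σ2) :
    ∫⁻ w, ENNReal.ofReal (Real.log (T3 w / T2 w)) ∂(jointM d μ σ2) ≤
      ENNReal.ofReal (Real.log (3 / 2)) +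
        ENNReal.ofReal (kap d) * ∫⁻ w, ENNReal.ofReal (S3 w / T3 w) ∂(jointM d μ σ2) := by
  have hk : 0 ≤ kap d := by unfold kap; split_ifs <;> norm_num
  rw [lintegral_log_T hd1 μ hσ, lintegral_ratio hd1 μ hσ, ← mul_assoc,
    ← ENNReal.ofReal_mul hk]
  exact one_dim_ineq hd1 hd4 (by positivity)

/-! ### Integration against the Gaussian-mixture prior -/

/-- Product of two Gaussian densities with a common mean `μ`: completing the square in `μ`. -/
lemma gaussPdf_mul (d : ℕ) (y x μ : Euc d) {A B : ℝ} (hA : 0 < A) (hB : 0 < B) :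
    gaussPdf d y μ A * gaussPdf d x μ B = gaussPdf d y x (A + B) *
      gaussPdf d ((A + B)⁻¹ • (B • y + A • x)) μ (A * B / (A + B)) := by
  have hAB : 0 < A + B := by positivity
  have hpi := Real.pi_pos
  unfold gaussPdf
  have h1 : (2 * Real.pi * A) ^ (-(d : ℝ) / 2) * (2 * Real.pi * B) ^ (-(d : ℝ) / 2) =
      (2 * Real.pi * (A + B)) ^ (-(d : ℝ) / 2) *
        (2 * Real.pi * (A * B / (A + B))) ^ (-(d : ℝ) / 2) := by
    rw [← Real.mul_rpow (by positivity) (by positivity),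
      ← Real.mul_rpow (by positivity) (by positivity)]
    congr 1
    field_simp
  have h2 : Real.exp (-‖y - μ‖ ^ 2 / (2 * A)) * Real.exp (-‖x - μ‖ ^ 2 / (2 * B)) =
      Real.exp (-‖y - x‖ ^ 2 / (2 * (A + B))) *
        Real.exp (-‖(A + B)⁻¹ • (B • y + A • x) - μ‖ ^ 2 / (2 * (A * B / (A + B)))) := by
    rw [← Real.exp_add, ← Real.exp_add]
    congr 1
    have e1 : y - x = (y - μ) - (x - μ) := by abel
    have e2 : (A + B)⁻¹ • (B • y + A • x) - μ = (A + B)⁻¹ • (B • (y - μ) + A • (x - μ)) := by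
      have : μ = (A + B)⁻¹ • (B • μ + A • μ) := by
        rw [← add_smul, smul_smul, add_comm B A, inv_mul_cancel₀ hAB.ne', one_smul]
      nth_rewrite 1 [this]
      simp only [smul_sub, smul_add]
      abel
    rw [e1, e2]
    generalize y - μ = u
    generalize x - μ = w
    rw [norm_sub_sq_real, norm_smul, mul_pow, norm_add_sq_real, inner_smul_left, inner_smul_right,
      norm_smul, norm_smul, Real.norm_eq_abs, Real.norm_eq_abs, Real.norm_eq_abs,
      abs_of_pos (inv_pos.2 hAB), abs_of_pos hA, abs_of_pos hB]
    simp only [conj_trivial]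
    field_simp
    ring
  calc _ = ((2 * Real.pi * A) ^ (-(d : ℝ) / 2) * (2 * Real.pi * B) ^ (-(d : ℝ) / 2)) *
      (Real.exp (-‖y - μ‖ ^ 2 / (2 * A)) * Real.exp (-‖x - μ‖ ^ 2 / (2 * B))) := by ring
    _ = _ := by rw [h1, h2]; ring

lemma gaussPdf_symm (d : ℕ) (x y : Euc d) (τ : ℝ) : gaussPdf d x y τ = gaussPdf d y x τ := by
  unfold gaussPdf
  rw [norm_sub_rev]

lemma gaussPdf_conv_aux (d : ℕ) (z μ : Euc d) {A B : ℝ} (hA : 0 < A) (hB : 0 < B) :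
    gaussPdf d z μ A * gaussPdf d μ 0 B = gaussPdf d z 0 (A + B) *
      gaussPdf d μ ((A + B)⁻¹ • (B • z + A • (0 : Euc d))) (A * B / (A + B)) := by
  rw [gaussPdf_symm d μ 0, gaussPdf_mul d z 0 μ hA hB, gaussPdf_symm d _ μ]

lemma integrable_gaussPdf_conv (d : ℕ) (z : Euc d) {A B : ℝ} (hA : 0 < A) (hB : 0 < B) :
    Integrable fun μ => gaussPdf d z μ A * gaussPdf d μ 0 B := by
  simp_rw [gaussPdf_conv_aux d z _ hA hB]
  exact (integrable_gaussPdf d _ (by positivity)).const_mul _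

lemma integral_gaussPdf_conv (d : ℕ) (z : Euc d) {A B : ℝ} (hA : 0 < A) (hB : 0 < B) :
    ∫ μ, gaussPdf d z μ A * gaussPdf d μ 0 B = gaussPdf d z 0 (A + B) := by
  simp_rw [gaussPdf_conv_aux d z _ hA hB]
  rw [integral_const_mul, integral_gaussPdf d _ (by positivity), mul_one]

/-- Tonelli's theorem for Bochner integrals of a nonnegative function, one of whose iterated
integrals is known to be finite. -/
lemma swap_nonneg {α β : Type*} [MeasurableSpace α] [MeasurableSpace β] {μ : Measure α}
    {ν : Measure β} [SFinite μ] [SFinite ν] {f : α → β → ℝ}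
    (hm : Measurable (Function.uncurry f)) (h0 : ∀ᵐ y ∂ν, ∀ᵐ x ∂μ, 0 ≤ f x y)
    (hi : ∀ᵐ y ∂ν, Integrable (fun x => f x y) μ)
    (hI : Integrable (fun y => ∫ x, f x y ∂μ) ν) :
    ∫ x, ∫ y, f x y ∂ν ∂μ = ∫ y, ∫ x, f x y ∂μ ∂ν := by
  refine integral_integral_swap ((integrable_prod_iff' hm.aestronglyMeasurable).2 ⟨hi, ?_⟩)
  refine hI.congr ?_
  filter_upwards [h0] with y hy
  refine integral_congr_ae ?_
  filter_upwards [hy] with x hx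
  simp [Function.uncurry, abs_of_nonneg hx]

lemma integral_beta {a b : ℝ} (ha : 0 < a) (hb : 0 < b) :
    ∫ r in Ioo (0 : ℝ) 1, r ^ (a - 1) * (1 - r) ^ (b - 1) = ProbabilityTheory.beta a b := by
  have h := ProbabilityTheory.lintegral_betaPDF_eq_one ha hb
  have hB := ProbabilityTheory.beta_pos ha hb
  rw [ProbabilityTheory.lintegral_betaPDF] at h
  have h2 : ∫ r in Ioo (0 : ℝ) 1, 1 / ProbabilityTheory.beta a b * r ^ (a - 1) * (1 - r) ^ (b - 1) = 1 := by
    rw [integral_eq_lintegral_of_nonneg_ae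
      (ae_restrict_of_forall_mem measurableSet_Ioo fun r hr => ?_)
      (Measurable.aestronglyMeasurable (by fun_prop)), h, ENNReal.toReal_one]
    have h1 : 0 < 1 - r := by linarith [hr.2]
    have h0 := hr.1
    simp only [Pi.zero_apply]
    positivity
  simp_rw [mul_assoc] at h2
  rw [integral_const_mul] at h2
  field_simp at h2
  linarith

lemma integrable_beta {a b : ℝ} (ha : 0 < a) (hb : 0 < b) :
    IntegrableOn (fun r : ℝ => r ^ (a - 1) * (1 - r) ^ (b - 1)) (Ioo 0 1) := by
  by_contra h
  have h2 := integral_beta ha hb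
  rw [integral_undef h] at h2
  exact (ProbabilityTheory.beta_pos ha hb).ne h2

/-- Shrinkage factor `λ / (1 - cλ)`; for `c = 1 - 1/l` the marginal of `x̄_l` given `(η, λ)` has
precision `η` times this. -/
def tauF (c l : ℝ) : ℝ := l / (1 - c * l)

/-- Mixing weight in `λ` after integrating out the mean. -/
def mixW (d : ℕ) (ν c l : ℝ) : ℝ :=
  tauF c l ^ ((d : ℝ) / 2) * l ^ (ν - (d : ℝ) / 2 - 1) * qLow d 2 ν l

lemma measurable_tauF (c : ℝ) : Measurable (tauF c) := by unfold tauF; fun_prop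

lemma measurable_mixW (d : ℕ) (ν c : ℝ) : Measurable (mixW d ν c) := by
  unfold mixW tauF qLow; fun_prop

lemma qLow_two (d : ℕ) (ν l : ℝ) :
    qLow d 2 ν l = (1 - l) ^ ((d : ℝ) / 2 - 1) * (1 - l / 2) ^ (-ν) := by
  unfold qLow
  congr 2 <;> push_cast <;> ring

lemma one_sub_mul_pos {c l : ℝ} (hc : c ≤ 1) (hl : l ∈ Ioo (0 : ℝ) 1) : 0 < 1 - c * l := by
  nlinarith [hl.1, hl.2]

lemma tauF_pos {c l : ℝ} (hc : c ≤ 1) (hl : l ∈ Ioo (0 : ℝ) 1) : 0 < tauF c l :=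
  div_pos hl.1 (one_sub_mul_pos hc hl)

lemma mixW_eq (d : ℕ) (ν : ℝ) {c l : ℝ} (hc : c ≤ 1) (hl : l ∈ Ioo (0 : ℝ) 1) :
    mixW d ν c l = l ^ (ν - 1) * (1 - l) ^ ((d : ℝ) / 2 - 1) *
      ((1 - c * l) ^ (-(d : ℝ) / 2) * (1 - l / 2) ^ (-ν)) := by
  have h1 := one_sub_mul_pos hc hl
  unfold mixW tauF
  rw [qLow_two, Real.div_rpow hl.1.le h1.le, neg_div, Real.rpow_neg h1.le,
    show ν - 1 = (d : ℝ) / 2 + (ν - d / 2 - 1) by ring, Real.rpow_add hl.1]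
  ring

lemma mixW_nonneg (d : ℕ) (ν : ℝ) {c l : ℝ} (hc : c ≤ 1) (hl : l ∈ Ioo (0 : ℝ) 1) :
    0 ≤ mixW d ν c l := by
  have h1 := one_sub_mul_pos hc hl
  have h2 : 0 < 1 - l := by linarith [hl.2]
  have h3 : 0 < 1 - l / 2 := by linarith [hl.2, hl.1]
  have h0 := hl.1
  rw [mixW_eq d ν hc hl]
  positivity

lemma integrable_mixW {d : ℕ} (hd : 1 ≤ d) {ν c : ℝ} (hν : 0 < ν) (hc0 : 0 ≤ c) (hc : c ≤ 2 / 3) :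
    IntegrableOn (mixW d ν c) (Ioo 0 1) := by
  have hd0 : (0 : ℝ) < d := by exact_mod_cast hd
  have hb := integrable_beta hν (show (0 : ℝ) < d / 2 by positivity)
  refine (hb.mul_const ((1 / 3 : ℝ) ^ (-(d : ℝ) / 2) * (1 / 2 : ℝ) ^ (-ν))).mono'
    (measurable_mixW d ν c).aestronglyMeasurable
    (ae_restrict_of_forall_mem measurableSet_Ioo fun l hl => ?_)
  rw [Real.norm_eq_abs, abs_of_nonneg (mixW_nonneg d ν (by linarith) hl),
    mixW_eq d ν (by linarith) hl]
  have h0 := hl.1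
  have h2 : 0 < 1 - l := by linarith [hl.2]
  have h3 : 0 < 1 - l / 2 := by linarith [hl.2, hl.1]
  refine mul_le_mul_of_nonneg_left ?_ (by positivity)
  refine mul_le_mul (Real.rpow_le_rpow_of_nonpos (by norm_num) ?_ ?_)
    (Real.rpow_le_rpow_of_nonpos (by norm_num) ?_ (by linarith)) (by positivity) (by positivity)
  · nlinarith [hl.1, hl.2]
  · rw [neg_div]; simp only [Left.neg_nonpos_iff]; positivity
  · linarith [hl.2]

lemma gaussPdf_zero_prec (d : ℕ) (z : Euc d) {p : ℝ} (hp : 0 < p) :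
    gaussPdf d z 0 p⁻¹ = (2 * Real.pi) ^ (-(d : ℝ) / 2) *
      (p ^ ((d : ℝ) / 2) * Real.exp (-(p * ‖z‖ ^ 2 / 2))) := by
  have hpi := Real.pi_pos
  unfold gaussPdf
  rw [Real.mul_rpow (by positivity) (by positivity), Real.inv_rpow hp.le, neg_div (2 : ℝ) (d : ℝ),
    Real.rpow_neg hp.le, inv_inv, sub_zero, mul_assoc]
  congr 3
  field_simp

/-- Integrating a Gaussian-Gamma kernel against the Gaussian-mixture prior reduces to a
one-dimensional integral over the mixing variable. -/
lemma mixture_formula {d : ℕ} (hd : 1 ≤ d) {ν k v c l : ℝ} (hν : 0 < ν) (hk : 0 ≤ k) (hv : 0 < v)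
    (hl : 0 < l) (hc0 : 0 ≤ c) (hc : c ≤ 2 / 3) (hlc : l⁻¹ = 1 - c) (z : Euc d) :
    ∫ η in Ioi (0 : ℝ), ∫ μ, gaussPdf d z μ ((l * η)⁻¹) * (η ^ k * Real.exp (-(η * v / 2))) *
      gmPrior d ν (qLow d 2 ν) μ η =
    (2 * Real.pi) ^ (-(d : ℝ) / 2) * ∫ t in Ioo (0 : ℝ) 1, mixW d ν c t *
      (Real.Gamma (k + ν) * (2 / (v + tauF c t * ‖z‖ ^ 2)) ^ (k + ν)) := by
  have hc1 : c ≤ 1 := by linarith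
  have hW := integrable_mixW hd hν hc0 hc
  have hpi := Real.pi_pos
  have hkey : ∀ η ∈ Ioi (0 : ℝ), ∀ t ∈ Ioo (0 : ℝ) 1,
      gaussPdf d z 0 ((l * η)⁻¹ + η⁻¹ * t⁻¹ * (1 - t)) * ((η ^ k * Real.exp (-(η * v / 2))) *
        (η ^ (ν - (d : ℝ) / 2 - 1) * t ^ (ν - (d : ℝ) / 2 - 1) * qLow d 2 ν t)) =
      (2 * Real.pi) ^ (-(d : ℝ) / 2) * (mixW d ν c t * (η ^ (k + ν - 1) *
        Real.exp (-((v + tauF c t * ‖z‖ ^ 2) / 2 * η)))) := by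
    intro η hη t ht
    have hη0 : 0 < η := hη
    have ht0 := ht.1
    have hτ := tauF_pos hc1 ht
    have h1 := one_sub_mul_pos hc1 ht
    have e1 : (l * η)⁻¹ + η⁻¹ * t⁻¹ * (1 - t) = (η * tauF c t)⁻¹ := by
      unfold tauF
      rw [mul_inv, hlc]
      field_simp
      ring
    rw [e1, gaussPdf_zero_prec d z (by positivity), Real.mul_rpow hη0.le hτ.le]
    have e2 : η ^ (k + ν - 1) = η ^ k * η ^ (ν - (d : ℝ) / 2 - 1) * η ^ ((d : ℝ) / 2) := by
      rw [← Real.rpow_add hη0, ← Real.rpow_add hη0]; congr 1; ring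
    have e3 : Real.exp (-((v + tauF c t * ‖z‖ ^ 2) / 2 * η)) =
        Real.exp (-(η * tauF c t * ‖z‖ ^ 2 / 2)) * Real.exp (-(η * v / 2)) := by
      rw [← Real.exp_add]; congr 1; ring
    rw [e2, e3]
    unfold mixW
    ring
  -- integrate out the mean, for fixed precision
  have hinner : ∀ η ∈ Ioi (0 : ℝ), ∫ μ, gaussPdf d z μ ((l * η)⁻¹) *
      (η ^ k * Real.exp (-(η * v / 2))) * gmPrior d ν (qLow d 2 ν) μ η =
      ∫ t in Ioo (0 : ℝ) 1, (2 * Real.pi) ^ (-(d : ℝ) / 2) * (mixW d ν c t * (η ^ (k + ν - 1) *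
        Real.exp (-((v + tauF c t * ‖z‖ ^ 2) / 2 * η)))) := by
    intro η hη
    have hη0 : 0 < η := hη
    have hB : ∀ t ∈ Ioo (0 : ℝ) 1, 0 < η⁻¹ * t⁻¹ * (1 - t) := fun t ht => by
      have := ht.1
      have : 0 < 1 - t := by linarith [ht.2]
      positivity
    have hq0 : ∀ t ∈ Ioo (0 : ℝ) 1, 0 ≤ qLow d 2 ν t := fun t ht => by
      have := ht.1
      have : 0 < 1 - t := by linarith [ht.2]
      have : 0 < 1 - t / 2 := by linarith [ht.2]
      rw [qLow_two]
      positivity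
    unfold gmPrior
    simp_rw [← integral_const_mul]
    have hfac : ∀ t : ℝ, ∀ μ : Euc d, gaussPdf d z μ ((l * η)⁻¹) *
        (η ^ k * Real.exp (-(η * v / 2))) * (gaussPdf d μ 0 (η⁻¹ * t⁻¹ * (1 - t)) *
          η ^ (ν - (d : ℝ) / 2 - 1) * t ^ (ν - (d : ℝ) / 2 - 1) * qLow d 2 ν t) =
        gaussPdf d z μ ((l * η)⁻¹) * gaussPdf d μ 0 (η⁻¹ * t⁻¹ * (1 - t)) *
          ((η ^ k * Real.exp (-(η * v / 2))) *
        (η ^ (ν - (d : ℝ) / 2 - 1) * t ^ (ν - (d : ℝ) / 2 - 1) * qLow d 2 ν t)) := by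
      intro t μ; ring
    have hval : ∀ t ∈ Ioo (0 : ℝ) 1, ∫ μ, gaussPdf d z μ ((l * η)⁻¹) *
        (η ^ k * Real.exp (-(η * v / 2))) * (gaussPdf d μ 0 (η⁻¹ * t⁻¹ * (1 - t)) *
          η ^ (ν - (d : ℝ) / 2 - 1) * t ^ (ν - (d : ℝ) / 2 - 1) * qLow d 2 ν t) =
        (2 * Real.pi) ^ (-(d : ℝ) / 2) * (mixW d ν c t * (η ^ (k + ν - 1) *
          Real.exp (-((v + tauF c t * ‖z‖ ^ 2) / 2 * η)))) := by
      intro t ht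
      simp_rw [hfac t]
      rw [integral_mul_const, integral_gaussPdf_conv d z (by positivity) (hB t ht), hkey η hη t ht]
    rw [swap_nonneg]
    · exact setIntegral_congr_fun measurableSet_Ioo hval
    · have hg1 : Measurable fun p : Euc d × ℝ => gaussPdf d z p.1 ((l * η)⁻¹) :=
        gaussPdf_measurable d measurable_const measurable_fst measurable_const
      have hg2 : Measurable fun p : Euc d × ℝ => gaussPdf d p.1 0 (η⁻¹ * p.2⁻¹ * (1 - p.2)) :=
        gaussPdf_measurable d measurable_fst measurable_const (by fun_prop)
      unfold qLow Function.uncurry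
      fun_prop
    · refine ae_restrict_of_forall_mem measurableSet_Ioo fun t ht => ae_of_all _ fun μ => ?_
      have h1 := gaussPdf_pos d z μ (τ := (l * η)⁻¹) (by positivity)
      have h2 := gaussPdf_pos d μ 0 (hB t ht)
      have h3 := hq0 t ht
      have := ht.1
      positivity
    · refine ae_restrict_of_forall_mem measurableSet_Ioo fun t ht => ?_
      simp_rw [hfac t]
      exact (integrable_gaussPdf_conv d z (by positivity) (hB t ht)).mul_const _
    · have : IntegrableOn (fun t => (2 * Real.pi) ^ (-(d : ℝ) / 2) * (mixW d ν c t *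
          (η ^ (k + ν - 1) * Real.exp (-((v + tauF c t * ‖z‖ ^ 2) / 2 * η))))) (Ioo 0 1) := by
        refine Integrable.const_mul ?_ _
        refine (hW.mul_const (η ^ (k + ν - 1))).mono' ?_ ?_
        · have := measurable_tauF c
          have := measurable_mixW d ν c
          exact Measurable.aestronglyMeasurable (by fun_prop)
        · refine ae_restrict_of_forall_mem measurableSet_Ioo fun t ht => ?_
          have h0 := mixW_nonneg d ν hc1 ht
          have h1 := tauF_pos hc1 ht
          rw [Real.norm_eq_abs, abs_of_nonneg (by positivity)]
          refine mul_le_mul_of_nonneg_left ?_ h0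
          refine mul_le_of_le_one_right (by positivity) (Real.exp_le_one_iff.2 ?_)
          simp only [Left.neg_nonpos_iff]
          positivity
      refine this.congr (ae_restrict_of_forall_mem measurableSet_Ioo fun t ht => ?_)
      exact (hval t ht).symm
  rw [setIntegral_congr_fun measurableSet_Ioi hinner]
  -- integrate out the precision
  have hgam : ∀ t ∈ Ioo (0 : ℝ) 1, 0 < (v + tauF c t * ‖z‖ ^ 2) / 2 := fun t ht => by
    have h1 := tauF_pos hc1 ht
    positivity
  have hval : ∀ t ∈ Ioo (0 : ℝ) 1, ∫ η in Ioi (0 : ℝ), (2 * Real.pi) ^ (-(d : ℝ) / 2) *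
      (mixW d ν c t * (η ^ (k + ν - 1) * Real.exp (-((v + tauF c t * ‖z‖ ^ 2) / 2 * η)))) =
      (2 * Real.pi) ^ (-(d : ℝ) / 2) * (mixW d ν c t *
        (Real.Gamma (k + ν) * (2 / (v + tauF c t * ‖z‖ ^ 2)) ^ (k + ν))) := by
    intro t ht
    rw [integral_const_mul, integral_const_mul,
      Real.integral_rpow_mul_exp_neg_mul_Ioi (by linarith) (hgam t ht), one_div_div,
      mul_comm (Real.Gamma _)]
  rw [swap_nonneg, ← integral_const_mul]
  · exact setIntegral_congr_fun measurableSet_Ioo hval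
  · have := measurable_tauF c
    have := measurable_mixW d ν c
    unfold Function.uncurry
    fun_prop
  · refine ae_restrict_of_forall_mem measurableSet_Ioo fun t ht =>
      ae_restrict_of_forall_mem measurableSet_Ioi fun η hη => ?_
    have hη0 : 0 < η := hη
    have h0 := mixW_nonneg d ν hc1 ht
    positivity
  · refine ae_restrict_of_forall_mem measurableSet_Ioo fun t ht => ?_
    refine Integrable.const_mul (Integrable.const_mul ?_ _) _
    by_contra hcon
    have h := Real.integral_rpow_mul_exp_neg_mul_Ioi (a := k + ν) (by linarith) (hgam t ht)
    rw [integral_undef hcon] at h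
    have h1 := Real.Gamma_pos_of_pos (show 0 < k + ν by linarith)
    have h2 := hgam t ht
    have : 0 < (1 / ((v + tauF c t * ‖z‖ ^ 2) / 2)) ^ (k + ν) * Real.Gamma (k + ν) := by positivity
    linarith
  · have : IntegrableOn (fun t => (2 * Real.pi) ^ (-(d : ℝ) / 2) * (mixW d ν c t *
        (Real.Gamma (k + ν) * (2 / (v + tauF c t * ‖z‖ ^ 2)) ^ (k + ν)))) (Ioo 0 1) := by
      refine Integrable.const_mul ?_ _
      refine (hW.mul_const (Real.Gamma (k + ν) * (2 / v) ^ (k + ν))).mono' ?_ ?_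
      · have := measurable_tauF c
        have := measurable_mixW d ν c
        exact Measurable.aestronglyMeasurable (by fun_prop)
      · refine ae_restrict_of_forall_mem measurableSet_Ioo fun t ht => ?_
        have h0 := mixW_nonneg d ν hc1 ht
        have h1 := tauF_pos hc1 ht
        have h2 := Real.Gamma_pos_of_pos (show 0 < k + ν by linarith)
        rw [Real.norm_eq_abs, abs_of_nonneg (by positivity)]
        have h3 : 0 ≤ tauF c t * ‖z‖ ^ 2 := by positivity
        gcongr
        linarith
    refine this.congr (ae_restrict_of_forall_mem measurableSet_Ioo fun t ht => ?_)
    exact (hval t ht).symm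

/-! ### The Bayesian predictive density in closed form -/

/-- The Möbius substitution `t = A r/(B(1-r) + A r)` behind Feynman's parameter formula. -/
lemma feynman_subst {A B : ℝ} (hA : 0 < A) (hB : 0 < B) (ν b : ℝ) (g : ℝ → ℝ) :
    ∫ t in Ioo (0 : ℝ) 1, t ^ (ν - 1) * (1 - t) ^ (b - 1) * (A * (1 - t) + B * t) ^ (-(b + ν)) *
      g t = A ^ (-b) * B ^ (-ν) * ∫ r in Ioo (0 : ℝ) 1, r ^ (ν - 1) * (1 - r) ^ (b - 1) *
        g (A * r / (B * (1 - r) + A * r)) := by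
  have hD : ∀ r ∈ Ioo (0 : ℝ) 1, 0 < B * (1 - r) + A * r := fun r hr => by
    have h1 : 0 < 1 - r := by linarith [hr.2]
    have := hr.1
    positivity
  have hone : ∀ r ∈ Ioo (0 : ℝ) 1, 1 - A * r / (B * (1 - r) + A * r) =
      B * (1 - r) / (B * (1 - r) + A * r) := fun r hr => by
    have := hD r hr
    field_simp
    ring
  have himg : (fun r : ℝ => A * r / (B * (1 - r) + A * r)) '' Ioo 0 1 = Ioo 0 1 := by
    ext x
    simp only [mem_image]
    constructor
    · rintro ⟨r, hr, rfl⟩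
      have h := hD r hr
      have h0 := hr.1
      have h1 : 0 < 1 - r := by linarith [hr.2]
      refine ⟨by positivity, ?_⟩
      rw [div_lt_one h]
      nlinarith
    · intro hx
      have hx0 := hx.1
      have hx1 : 0 < 1 - x := by linarith [hx.2]
      have hE : 0 < A * (1 - x) + B * x := by positivity
      refine ⟨B * x / (A * (1 - x) + B * x), ⟨by positivity, ?_⟩, ?_⟩
      · rw [div_lt_one hE]
        nlinarith
      · have : 1 - B * x / (A * (1 - x) + B * x) = A * (1 - x) / (A * (1 - x) + B * x) := by
          field_simp; ring
        rw [this]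
        field_simp
        ring
  have hder : ∀ r ∈ Ioo (0 : ℝ) 1, HasDerivWithinAt (fun r : ℝ => A * r / (B * (1 - r) + A * r))
      (A * B / (B * (1 - r) + A * r) ^ 2) (Ioo 0 1) r := by
    intro r hr
    have h := hD r hr
    have h1 : HasDerivAt (fun r : ℝ => A * r) (A * 1) r := (hasDerivAt_id r).const_mul A
    have h2 : HasDerivAt (fun r : ℝ => B * (1 - r) + A * r) (B * (0 - 1) + A * 1) r :=
      (((hasDerivAt_const r (1 : ℝ)).sub (hasDerivAt_id r)).const_mul B).add h1
    refine ((h1.div h2 h.ne').congr_deriv ?_).hasDerivWithinAt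
    congr 1
    ring
  have hinj : InjOn (fun r : ℝ => A * r / (B * (1 - r) + A * r)) (Ioo 0 1) := by
    intro p hp r hr h
    have h1 := hD p hp
    have h2 := hD r hr
    simp only at h
    rw [div_eq_div_iff h1.ne' h2.ne'] at h
    have : (A * B) * (p - r) = 0 := by linear_combination h
    rcases mul_eq_zero.1 this with h' | h'
    · have : 0 < A * B := by positivity
      linarith
    · linarith
  nth_rewrite 1 [← himg]
  rw [integral_image_eq_integral_abs_deriv_smul measurableSet_Ioo hder hinj, ← integral_const_mul]
  refine setIntegral_congr_fun measurableSet_Ioo fun r hr => ?_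
  have h := hD r hr
  have h0 := hr.1
  have h1 : 0 < 1 - r := by linarith [hr.2]
  simp only [smul_eq_mul]
  have hlin : A * (B * (1 - r) / (B * (1 - r) + A * r)) + B * (A * r / (B * (1 - r) + A * r)) =
      A * B / (B * (1 - r) + A * r) := by field_simp; ring
  rw [hone r hr, hlin, abs_of_pos (by positivity)]
  generalize g (A * r / (B * (1 - r) + A * r)) = G
  generalize B * (1 - r) + A * r = D at h
  rw [Real.div_rpow (by positivity) h.le, Real.div_rpow (by positivity) h.le,
    Real.div_rpow (by positivity) h.le, Real.mul_rpow hA.le h0.le, Real.mul_rpow hB.le h1.le,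
    Real.mul_rpow hA.le hB.le]
  have eA : A ^ (-b) = A ^ (ν - 1) * A ^ (-(b + ν)) * A := by
    rw [← Real.rpow_add hA, ← Real.rpow_add_one hA.ne']; congr 1; ring
  have eB : B ^ (-ν) = B ^ (b - 1) * B ^ (-(b + ν)) * B := by
    rw [← Real.rpow_add hB, ← Real.rpow_add_one hB.ne']; congr 1; ring
  have eD : D ^ 2 * D ^ (ν - 1) * D ^ (b - 1) * D ^ (-(b + ν)) = 1 := by
    rw [← Real.rpow_natCast, ← Real.rpow_add h, ← Real.rpow_add h, ← Real.rpow_add h]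
    convert Real.rpow_zero D using 2
    push_cast
    ring
  rw [eA, eB]
  have p1 := Real.rpow_pos_of_pos h (ν - 1)
  have p2 := Real.rpow_pos_of_pos h (b - 1)
  have p3 := Real.rpow_pos_of_pos h (-(b + ν))
  generalize D ^ (ν - 1) = x1 at *
  generalize D ^ (b - 1) = x2 at *
  generalize D ^ (-(b + ν)) = x3 at *
  have hD2 : A * B / D ^ 2 = A * B * (x1 * x2 * x3) := by
    rw [div_eq_iff (by positivity)]
    linear_combination -(A * B) * eD
  rw [hD2]
  field_simp

/-- The factor by which the three-observation mixture integrand departs from a Beta kernel. -/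
def psiF (d : ℕ) (ν t : ℝ) : ℝ :=
  (1 - 2 / 3 * t) ^ ((d : ℝ) / 2 + ν) * (1 - t) ^ (-(d : ℝ) / 2) * (1 - t / 2) ^ (-ν)

/-- The mixing variable in terms of the Beta variable `r`, where `ω = s₃/T₃`. -/
def lamF (ω r : ℝ) : ℝ := 3 * ω * r / (1 - r + 3 * ω * r)

/-- Expectation of `psiF` over the mixing variable when `r ~ Beta(ν, d)`. -/
def shrinkF (d : ℕ) (ν ω : ℝ) : ℝ :=
  (∫ r in Ioo (0 : ℝ) 1, r ^ (ν - 1) * (1 - r) ^ ((d : ℝ) - 1) * psiF d ν (lamF ω r)) /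
    ProbabilityTheory.beta ν d

/-- For sample size two, the choice of `q` turns the mixing integral into an exact Beta integral. -/
lemma mix_integral_two {d : ℕ} (hd : 1 ≤ d) {ν s : ℝ} (hν : 0 < ν) (hs : 0 < s) (x : Euc d) :
    ∫ t in Ioo (0 : ℝ) 1, mixW d ν (1 / 2) t *
      (Real.Gamma (d / 2 + ν) * (2 / (s + tauF (1 / 2) t * ‖x‖ ^ 2)) ^ ((d : ℝ) / 2 + ν)) =
    Real.Gamma ν * Real.Gamma (d / 2) * 2 ^ ((d : ℝ) / 2 + ν) *
      (s ^ (-((d : ℝ) / 2)) * ((s + 2 * ‖x‖ ^ 2) / 2) ^ (-ν)) := by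
  have hd0 : (0 : ℝ) < d := by exact_mod_cast hd
  have hG := Real.Gamma_pos_of_pos (show 0 < (d : ℝ) / 2 + ν by positivity)
  have h := feynman_subst hs (show 0 < (s + 2 * ‖x‖ ^ 2) / 2 by positivity) ν ((d : ℝ) / 2)
    (fun _ => Real.Gamma (d / 2 + ν) * 2 ^ ((d : ℝ) / 2 + ν))
  have h' := integral_mul_const (μ := volume.restrict (Ioo 0 1))
    (Real.Gamma (d / 2 + ν) * 2 ^ ((d : ℝ) / 2 + ν))
    (fun r : ℝ => r ^ (ν - 1) * (1 - r) ^ ((d : ℝ) / 2 - 1))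
  rw [h', integral_beta hν (by positivity), ProbabilityTheory.beta, add_comm ν] at h
  calc _ = _ := ?_
    _ = _ := h
    _ = _ := by field_simp
  refine setIntegral_congr_fun measurableSet_Ioo fun t ht => ?_
  have h0 := ht.1
  have h1 : 0 < 1 - t := by linarith [ht.2]
  have h2 : 0 < 1 - 1 / 2 * t := by linarith [ht.2]
  have hv : s + tauF (1 / 2) t * ‖x‖ ^ 2 =
      (s * (1 - t) + (s + 2 * ‖x‖ ^ 2) / 2 * t) / (1 - 1 / 2 * t) := by
    unfold tauF
    rw [eq_div_iff h2.ne']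
    have hc : t / (1 - 1 / 2 * t) * (1 - 1 / 2 * t) = t := div_mul_cancel₀ _ h2.ne'
    linear_combination ‖x‖ ^ 2 * hc
  have hE : 0 < s * (1 - t) + (s + 2 * ‖x‖ ^ 2) / 2 * t := by positivity
  rw [hv, mixW_eq d ν (by norm_num) ht, show 1 - t / 2 = 1 - 1 / 2 * t by ring]
  generalize s * (1 - t) + (s + 2 * ‖x‖ ^ 2) / 2 * t = E at hE
  rw [div_div_eq_mul_div, Real.div_rpow (by positivity) hE.le, Real.mul_rpow zero_le_two h2.le,
    Real.rpow_neg hE.le]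
  have e : (1 - 1 / 2 * t) ^ (-(d : ℝ) / 2) * (1 - 1 / 2 * t) ^ (-ν) *
      (1 - 1 / 2 * t) ^ ((d : ℝ) / 2 + ν) = 1 := by
    rw [← Real.rpow_add h2, ← Real.rpow_add h2]
    convert Real.rpow_zero _ using 2
    ring
  linear_combination (t ^ (ν - 1) * (1 - t) ^ ((d : ℝ) / 2 - 1) * Real.Gamma (d / 2 + ν) *
    2 ^ ((d : ℝ) / 2 + ν) * (E ^ ((d : ℝ) / 2 + ν))⁻¹) * e

/-- With the future observation included, the mixing integral is a Beta integral up to the factor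
`shrinkF`. -/
lemma mix_integral_three {d : ℕ} (hd : 1 ≤ d) {ν v : ℝ} (hν : 0 < ν) (hv0 : 0 < v) (x : Euc d) :
    ∫ t in Ioo (0 : ℝ) 1, mixW d ν (2 / 3) t *
      (Real.Gamma (d + ν) * (2 / (v + tauF (2 / 3) t * ‖x‖ ^ 2)) ^ ((d : ℝ) + ν)) =
    Real.Gamma ν * Real.Gamma d * 2 ^ ((d : ℝ) + ν) *
      (v ^ (-(d : ℝ)) * ((v + 3 * ‖x‖ ^ 2) / 3) ^ (-ν)) *
        shrinkF d ν (v / (v + 3 * ‖x‖ ^ 2)) := by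
  have hd0 : (0 : ℝ) < d := by exact_mod_cast hd
  have hG := Real.Gamma_pos_of_pos (show 0 < (d : ℝ) + ν by positivity)
  have hG1 := Real.Gamma_pos_of_pos hd0
  have hG2 := Real.Gamma_pos_of_pos hν
  have h := feynman_subst hv0 (show 0 < (v + 3 * ‖x‖ ^ 2) / 3 by positivity) ν (d : ℝ)
    (fun t => psiF d ν t * (Real.Gamma (d + ν) * 2 ^ ((d : ℝ) + ν)))
  have hS : ∫ r in Ioo (0 : ℝ) 1, r ^ (ν - 1) * (1 - r) ^ ((d : ℝ) - 1) *
      (psiF d ν (v * r / ((v + 3 * ‖x‖ ^ 2) / 3 * (1 - r) + v * r)) *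
        (Real.Gamma (d + ν) * 2 ^ ((d : ℝ) + ν))) =
      ProbabilityTheory.beta ν d * shrinkF d ν (v / (v + 3 * ‖x‖ ^ 2)) *
        (Real.Gamma (d + ν) * 2 ^ ((d : ℝ) + ν)) := by
    unfold shrinkF
    rw [mul_div_cancel₀ _ (ProbabilityTheory.beta_pos hν hd0).ne', ← integral_mul_const]
    refine setIntegral_congr_fun measurableSet_Ioo fun r hr => ?_
    have h0 := hr.1
    have h1 : 0 < 1 - r := by linarith [hr.2]
    have : v * r / ((v + 3 * ‖x‖ ^ 2) / 3 * (1 - r) + v * r) =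
        lamF (v / (v + 3 * ‖x‖ ^ 2)) r := by
      unfold lamF
      rw [div_eq_div_iff (by positivity) (by positivity)]
      field_simp
    rw [this]
    ring
  rw [hS, ProbabilityTheory.beta, add_comm ν] at h
  calc _ = _ := ?_
    _ = _ := h
    _ = _ := by field_simp
  refine setIntegral_congr_fun measurableSet_Ioo fun t ht => ?_
  have h0 := ht.1
  have h1 : 0 < 1 - t := by linarith [ht.2]
  have h2 : 0 < 1 - 2 / 3 * t := by linarith [ht.2]
  have hv : v + tauF (2 / 3) t * ‖x‖ ^ 2 =
      (v * (1 - t) + (v + 3 * ‖x‖ ^ 2) / 3 * t) / (1 - 2 / 3 * t) := by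
    unfold tauF
    rw [eq_div_iff h2.ne']
    have hc : t / (1 - 2 / 3 * t) * (1 - 2 / 3 * t) = t := div_mul_cancel₀ _ h2.ne'
    linear_combination ‖x‖ ^ 2 * hc
  have hE : 0 < v * (1 - t) + (v + 3 * ‖x‖ ^ 2) / 3 * t := by positivity
  rw [hv, mixW_eq d ν (by norm_num) ht]
  generalize v * (1 - t) + (v + 3 * ‖x‖ ^ 2) / 3 * t = E at hE
  rw [div_div_eq_mul_div, Real.div_rpow (by positivity) hE.le, Real.mul_rpow zero_le_two h2.le,
    Real.rpow_neg hE.le]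
  unfold psiF
  have e : (1 - 2 / 3 * t) ^ (-(d : ℝ) / 2) * (1 - 2 / 3 * t) ^ ((d : ℝ) + ν) =
      (1 - 2 / 3 * t) ^ ((d : ℝ) / 2 + ν) := by
    rw [← Real.rpow_add h2]
    congr 1
    ring
  have e2 : (1 - t) ^ ((d : ℝ) - 1) * (1 - t) ^ (-(d : ℝ) / 2) = (1 - t) ^ ((d : ℝ) / 2 - 1) := by
    rw [← Real.rpow_add h1]
    congr 1
    ring
  rw [← e, ← e2]
  ring

/-- The chi-square likelihood of the precision `η`, as a Gamma kernel in `η`. -/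
lemma chi_prec (d : ℕ) {η s : ℝ} (hη : 0 < η) (hs : 0 < s) :
    η * chiSqPdf d (η * s) = s ^ ((d : ℝ) / 2 - 1) / (2 ^ ((d : ℝ) / 2) * Real.Gamma (d / 2)) *
      (η ^ ((d : ℝ) / 2) * Real.exp (-(η * s / 2))) := by
  unfold chiSqPdf
  rw [Real.mul_rpow hη.le hs.le, Real.rpow_sub_one hη.ne', neg_div]
  field_simp

lemma bayesPredDen_eq {d : ℕ} (hd : 1 ≤ d) {ν s : ℝ} (hν : 0 < ν) (hs : 0 < s) (x : Euc d) :
    bayesPredDen d 2 (gmPrior d ν (qLow d 2 ν)) x s =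
      s ^ ((d : ℝ) / 2 - 1) / (2 ^ ((d : ℝ) / 2) * Real.Gamma (d / 2)) *
      ((2 * Real.pi) ^ (-(d : ℝ) / 2) * (Real.Gamma ν * Real.Gamma (d / 2) *
        2 ^ ((d : ℝ) / 2 + ν) * (s ^ (-((d : ℝ) / 2)) * ((s + 2 * ‖x‖ ^ 2) / 2) ^ (-ν)))) := by
  rw [← mix_integral_two hd hν hs x, ← mixture_formula hd (l := 2) hν (by positivity) hs two_pos
    (by norm_num) (by norm_num) (by norm_num) x, ← integral_const_mul]
  unfold bayesPredDen
  refine setIntegral_congr_fun measurableSet_Ioi fun η hη => ?_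
  have hη0 : 0 < η := hη
  rw [← integral_const_mul]
  refine integral_congr_ae (ae_of_all _ fun μ => ?_)
  have h := chi_prec d hη0 hs
  simp only
  rw [show (((2 : ℕ) : ℝ) - 1) * d = d by push_cast; ring, Nat.cast_ofNat]
  linear_combination (gaussPdf d x μ (2 * η)⁻¹ * gmPrior d ν (qLow d 2 ν) μ η) * h

lemma bayesPredNum_eq {d : ℕ} (hd : 1 ≤ d) {ν s : ℝ} (hν : 0 < ν) (hs : 0 < s) (y x : Euc d) :
    bayesPredNum d 2 (gmPrior d ν (qLow d 2 ν)) y x s =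
      ((3 * Real.pi) ^ (-(d : ℝ) / 2) *
      (s ^ ((d : ℝ) / 2 - 1) / (2 ^ ((d : ℝ) / 2) * Real.Gamma (d / 2)))) *
      ((2 * Real.pi) ^ (-(d : ℝ) / 2) * (Real.Gamma ν * Real.Gamma d * 2 ^ ((d : ℝ) + ν) *
        (S3 (s, x, y) ^ (-(d : ℝ)) * (T3 (s, x, y) / 3) ^ (-ν)) *
        shrinkF d ν (S3 (s, x, y) / T3 (s, x, y)))) := by
  have hS : 0 < S3 (s, x, y) := by unfold S3; positivity
  have hpi := Real.pi_pos
  have hT : T3 (s, x, y) = S3 (s, x, y) + 3 * ‖(1 / 3 : ℝ) • (y + (2 : ℝ) • x)‖ ^ 2 := by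
    unfold T3 S3
    rw [norm_smul, mul_pow, norm_add_sq_real, norm_sub_sq_real, norm_smul, inner_smul_right]
    norm_num
    ring
  rw [hT, ← mix_integral_three hd hν hS, ← mixture_formula hd (l := 3) hν (by positivity) hS
    three_pos (by norm_num) (by norm_num) (by norm_num) _, ← integral_const_mul]
  unfold bayesPredNum
  refine setIntegral_congr_fun measurableSet_Ioi fun η hη => ?_
  have hη0 : 0 < η := hη
  rw [← integral_const_mul]
  refine integral_congr_ae (ae_of_all _ fun μ => ?_)
  have h := chi_prec d hη0 hs
  have hm := gaussPdf_mul d y x μ (A := η⁻¹) (B := (2 * η)⁻¹) (by positivity) (by positivity)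
  have e1 : η⁻¹ * (2 * η)⁻¹ / (η⁻¹ + (2 * η)⁻¹) = (3 * η)⁻¹ := by field_simp; norm_num
  have e2 : (η⁻¹ + (2 * η)⁻¹)⁻¹ • ((2 * η)⁻¹ • y + η⁻¹ • x) = (1 / 3 : ℝ) • (y + (2 : ℝ) • x) := by
    rw [smul_add, smul_add, smul_smul, smul_smul, smul_smul]
    congr 2 <;> (field_simp; norm_num)
  have e3 : gaussPdf d y x (η⁻¹ + (2 * η)⁻¹) = (3 * Real.pi) ^ (-(d : ℝ) / 2) *
      (η ^ ((d : ℝ) / 2) * Real.exp (-(η * (2 / 3 * ‖y - x‖ ^ 2) / 2))) := by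
    unfold gaussPdf
    have : 2 * Real.pi * (η⁻¹ + (2 * η)⁻¹) = (3 * Real.pi) * η⁻¹ := by field_simp; norm_num
    rw [this, Real.mul_rpow (by positivity) (by positivity), Real.inv_rpow hη0.le,
      neg_div (2 : ℝ) (d : ℝ), Real.rpow_neg hη0.le, inv_inv, mul_assoc]
    congr 3
    field_simp
    ring
  rw [e1, e2, e3] at hm
  have e4 : η ^ (d : ℝ) = η ^ ((d : ℝ) / 2) * η ^ ((d : ℝ) / 2) := by
    rw [← Real.rpow_add hη0]; congr 1; ring
  have e5 : Real.exp (-(η * S3 (s, x, y) / 2)) =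
      Real.exp (-(η * (2 / 3 * ‖y - x‖ ^ 2) / 2)) * Real.exp (-(η * s / 2)) := by
    rw [← Real.exp_add]; congr 1; unfold S3; ring
  simp only
  rw [show (((2 : ℕ) : ℝ) - 1) * d = d by push_cast; ring, Nat.cast_ofNat, e4, e5, hm, mul_assoc _ η, h]
  ring

/-- The Bayes predictive density is the best equivariant one times an explicit factor. -/
lemma bayesPred_eq {d : ℕ} (hd : 1 ≤ d) {ν s : ℝ} (hν : 0 < ν) (hs : 0 < s) (y x : Euc d) :
    bayesPred d 2 (gmPrior d ν (qLow d 2 ν)) y x s = bestEquiv d 2 y x s *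
      ((3 * T2 (s, x, y) / (2 * T3 (s, x, y))) ^ ν *
        shrinkF d ν (S3 (s, x, y) / T3 (s, x, y))) := by
  have hd0 : (0 : ℝ) < d := by exact_mod_cast hd
  have hpi := Real.pi_pos
  have hS : 0 < S3 (s, x, y) := by unfold S3; positivity
  have hT2 : 0 < T2 (s, x, y) := by unfold T2; positivity
  have hT3 : 0 < T3 (s, x, y) := by unfold T3; positivity
  have hG1 := Real.Gamma_pos_of_pos hd0
  have hG2 := Real.Gamma_pos_of_pos hν
  have hG3 := Real.Gamma_pos_of_pos (show 0 < (d : ℝ) / 2 by positivity)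
  unfold bayesPred bestEquiv
  rw [bayesPredNum_eq hd hν hs, bayesPredDen_eq hd hν hs]
  have hT2' : s + 2 * ‖x‖ ^ 2 = T2 (s, x, y) := rfl
  have hS' : 1 + ((2 : ℕ) : ℝ) / ((((2 : ℕ) : ℝ) + 1) * s) * ‖y - x‖ ^ 2 = S3 (s, x, y) / s := by
    unfold S3; push_cast; field_simp; ring
  have e1 : ((2 : ℕ) : ℝ) * (d : ℝ) / 2 = d := by push_cast; ring
  have e2 : (((2 : ℕ) : ℝ) - 1) * (d : ℝ) / 2 = d / 2 := by push_cast; ring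
  have e3 : -(((2 : ℕ) : ℝ) * (d : ℝ)) / 2 = -d := by push_cast; ring
  have e4 : ((2 : ℕ) : ℝ) / ((((2 : ℕ) : ℝ) + 1) * Real.pi * s) = 2 / (3 * Real.pi * s) := by
    push_cast; norm_num
  rw [hT2', hS', e1, e2, e3, e4]
  generalize shrinkF d ν _ = F
  generalize S3 (s, x, y) = S at hS
  generalize T2 (s, x, y) = A at hT2
  generalize T3 (s, x, y) = B at hT3
  have f1 : (2 : ℝ) ^ ((d : ℝ) + ν) = 2 ^ ((d : ℝ) / 2 + ν) * 2 ^ ((d : ℝ) / 2) := by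
    rw [← Real.rpow_add two_pos]; congr 1; ring
  have f2 : s ^ (-(d : ℝ)) = s ^ (-((d : ℝ) / 2)) * s ^ (-((d : ℝ) / 2)) := by
    rw [← Real.rpow_add hs]; congr 1; ring
  have f3 : (3 * A / (2 * B)) ^ ν = (B / 3) ^ (-ν) / (A / 2) ^ (-ν) := by
    rw [← Real.div_rpow (by positivity) (by positivity), Real.rpow_neg (by positivity),
      ← Real.inv_rpow (by positivity)]
    congr 1
    field_simp
  rw [f3, f1, Real.div_rpow hS.le hs.le, f2, Real.div_rpow zero_le_two (by positivity),
    Real.mul_rpow (by positivity) hs.le, neg_div (2 : ℝ) (d : ℝ), Real.rpow_neg (by positivity : 0 ≤ 3 * Real.pi),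
    Real.rpow_neg hs.le]
  have p1 : 0 < s ^ ((d : ℝ) / 2) := by positivity
  have p2 : 0 < (2 * Real.pi) ^ (-((d : ℝ) / 2)) := by positivity
  have p3 : 0 < s ^ ((d : ℝ) / 2 - 1) := by positivity
  have p4 : 0 < (A / 2) ^ (-ν) := by positivity
  have p5 : 0 < (3 * Real.pi) ^ ((d : ℝ) / 2) := by positivity
  have p6 : (0 : ℝ) < 2 ^ ((d : ℝ) / 2 + ν) := by positivity
  field_simp

/-! ### Bounds on the shrinkage factor -/

lemma psiF_lamF {d : ℕ} {ν ω r : ℝ} (hω : 0 < ω) (hr : r ∈ Ioo (0 : ℝ) 1) :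
    psiF d ν (lamF ω r) = (1 + ω * (r / (1 - r))) ^ ((d : ℝ) / 2) *
      ((1 - r + ω * r) / (1 - r + 3 / 2 * ω * r)) ^ ν := by
  have h0 := hr.1
  have h1 : 0 < 1 - r := by linarith [hr.2]
  have hq : 0 < ω * r := by positivity
  have hD : 0 < 1 - r + 3 * ω * r := by nlinarith
  have hA : 0 < 1 - r + ω * r := by positivity
  have hB : 0 < 1 - r + 3 / 2 * ω * r := by positivity
  have e1 : 1 - 2 / 3 * lamF ω r = (1 - r + ω * r) / (1 - r + 3 * ω * r) := by
    unfold lamF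
    rw [eq_div_iff hD.ne']
    have hc : 3 * ω * r / (1 - r + 3 * ω * r) * (1 - r + 3 * ω * r) = 3 * ω * r :=
      div_mul_cancel₀ _ hD.ne'
    linear_combination (-2 / 3) * hc
  have e2 : 1 - lamF ω r = (1 - r) / (1 - r + 3 * ω * r) := by
    unfold lamF; rw [eq_div_iff hD.ne', sub_mul, div_mul_cancel₀ _ hD.ne']; ring
  have e3 : 1 - lamF ω r / 2 = (1 - r + 3 / 2 * ω * r) / (1 - r + 3 * ω * r) := by
    unfold lamF
    rw [eq_div_iff hD.ne', sub_mul, div_mul_eq_mul_div, div_mul_cancel₀ _ hD.ne']; ring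
  have e4 : 1 + ω * (r / (1 - r)) = (1 - r + ω * r) / (1 - r) := by
    rw [eq_div_iff h1.ne', add_mul, mul_assoc, div_mul_cancel₀ _ h1.ne']; ring
  unfold psiF
  rw [e1, e2, e3, e4]
  generalize 1 - r + ω * r = A at *
  generalize 1 - r + 3 / 2 * ω * r = B at *
  generalize 1 - r + 3 * ω * r = D at *
  rw [neg_div, Real.rpow_neg (by positivity), Real.rpow_neg (by positivity),
    Real.rpow_add (by positivity), Real.div_rpow hA.le hD.le, Real.div_rpow hA.le hD.le,
    Real.div_rpow h1.le hD.le, Real.div_rpow hB.le hD.le, Real.div_rpow hA.le h1.le,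
    Real.div_rpow hA.le hB.le]
  have := Real.rpow_pos_of_pos hD ((d : ℝ) / 2)
  have := Real.rpow_pos_of_pos hD ν
  have := Real.rpow_pos_of_pos h1 ((d : ℝ) / 2)
  have := Real.rpow_pos_of_pos hB ν
  field_simp

lemma psiF_nonneg {d : ℕ} {ν ω r : ℝ} (hω : 0 < ω) (hr : r ∈ Ioo (0 : ℝ) 1) :
    0 ≤ psiF d ν (lamF ω r) := by
  have h0 := hr.1
  have h1 : 0 < 1 - r := by linarith [hr.2]
  rw [psiF_lamF hω hr]
  positivity

lemma psiF_le {d : ℕ} {ν ω r : ℝ} (hν : 0 < ν) (hω : 0 < ω) (hω1 : ω ≤ 1)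
    (hr : r ∈ Ioo (0 : ℝ) 1) :
    psiF d ν (lamF ω r) ≤ (1 - r) ^ (-((d : ℝ) / 2)) := by
  have h0 := hr.1
  have h1 : 0 < 1 - r := by linarith [hr.2]
  have hq : 0 < ω * r := by positivity
  rw [psiF_lamF hω hr, Real.rpow_neg h1.le, ← Real.inv_rpow h1.le]
  have hG : 1 + ω * (r / (1 - r)) ≤ (1 - r)⁻¹ := by
    have : (1 - r)⁻¹ = 1 + r / (1 - r) := by field_simp; ring
    rw [this]
    have : 0 < r / (1 - r) := by positivity
    nlinarith
  have hle : ((1 - r + ω * r) / (1 - r + 3 / 2 * ω * r)) ^ ν ≤ 1 := by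
    apply Real.rpow_le_one (by positivity) _ hν.le
    rw [div_le_one (by positivity)]
    nlinarith
  calc _ ≤ (1 + ω * (r / (1 - r))) ^ ((d : ℝ) / 2) * 1 := by gcongr
    _ ≤ _ := by
      rw [mul_one]
      exact Real.rpow_le_rpow (by positivity) hG (by positivity)

/-- The `ν`-power of `psiF` costs at most half of a power of `1 + ω r/(1-r)`, because
`(P + Q)³ ≥ P (P + 3Q/2)²` for `P, Q ≥ 0`. -/
lemma le_psiF {d : ℕ} {ν ω r : ℝ} (hν : 0 < ν) (hω : 0 < ω) (hr : r ∈ Ioo (0 : ℝ) 1) :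
    (1 + ω * (r / (1 - r))) ^ (((d : ℝ) - ν) / 2) ≤ psiF d ν (lamF ω r) := by
  have h0 := hr.1
  have h1 : 0 < 1 - r := by linarith [hr.2]
  have hq : 0 < ω * r := by positivity
  have hG : 0 < 1 + ω * (r / (1 - r)) := by positivity
  rw [psiF_lamF hω hr]
  have key : (1 + ω * (r / (1 - r))) ^ (-(ν / 2)) ≤
      ((1 - r + ω * r) / (1 - r + 3 / 2 * ω * r)) ^ ν := by
    have hb : 0 ≤ (1 - r + ω * r) / (1 - r + 3 / 2 * ω * r) := by positivity
    have : ((1 - r + ω * r) / (1 - r + 3 / 2 * ω * r)) ^ ν =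
        (((1 - r + ω * r) / (1 - r + 3 / 2 * ω * r)) ^ 2) ^ (ν / 2) := by
      rw [← Real.rpow_natCast, ← Real.rpow_mul hb]
      congr 1
      push_cast; ring
    rw [this, Real.rpow_neg hG.le, ← Real.inv_rpow hG.le]
    refine Real.rpow_le_rpow (by positivity) ?_ (by positivity)
    have e4 : (1 + ω * (r / (1 - r)))⁻¹ = (1 - r) / (1 - r + ω * r) := by
      rw [inv_eq_one_div, div_eq_div_iff hG.ne' (by positivity)]
      have : r / (1 - r) * (1 - r) = r := div_mul_cancel₀ _ h1.ne'
      linear_combination -ω * this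
    rw [e4, div_pow, div_le_div_iff₀ (by positivity) (by positivity)]
    have : 0 < (1 - r) * (ω * r) ^ 2 := by positivity
    have : 0 < (ω * r) ^ 3 := by positivity
    nlinarith
  calc _ = (1 + ω * (r / (1 - r))) ^ ((d : ℝ) / 2) * (1 + ω * (r / (1 - r))) ^ (-(ν / 2)) := by
        rw [← Real.rpow_add hG]; congr 1; ring
    _ ≤ _ := by gcongr

lemma sum_le_neg_log {r : ℝ} (hr : r ∈ Ioo (0 : ℝ) 1) (K : ℕ) :
    ∑ i ∈ Finset.range K, r ^ (i + 1) / ((i : ℝ) + 1) ≤ -Real.log (1 - r) := by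
  have h := Real.hasSum_pow_div_log_of_abs_lt_one (x := r) (by rw [abs_of_pos hr.1]; exact hr.2)
  exact sum_le_hasSum _ (fun i _ => by have := hr.1; positivity) h

/-- Bernoulli's inequality turns the power of `1 + ω r/(1-r)` into an exponential that is linear
in `ω`. -/
lemma exp_le_psiF {d : ℕ} {ν ω r : ℝ} (hν : 0 < ν) (hνd : ν ≤ d) (hω : 0 < ω) (hω1 : ω ≤ 1)
    (hr : r ∈ Ioo (0 : ℝ) 1) (K : ℕ) :
    Real.exp (((d : ℝ) - ν) / 2 * ω * ∑ i ∈ Finset.range K, r ^ (i + 1) / ((i : ℝ) + 1)) ≤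
      psiF d ν (lamF ω r) := by
  have h0 := hr.1
  have h1 : 0 < 1 - r := by linarith [hr.2]
  have hz : 0 < r / (1 - r) := by positivity
  have hδ : 0 ≤ ((d : ℝ) - ν) / 2 := by linarith
  refine le_trans ?_ (le_psiF hν hω hr)
  have hb := rpow_one_add_le_one_add_mul_self (s := r / (1 - r)) (by linarith) hω.le hω1
  have e : 1 + r / (1 - r) = (1 - r)⁻¹ := by field_simp; ring
  rw [e, Real.rpow_def_of_pos (by positivity), Real.log_inv] at hb
  have hs := sum_le_neg_log hr K
  calc _ ≤ (Real.exp (-Real.log (1 - r) * ω)) ^ (((d : ℝ) - ν) / 2) := by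
        rw [← Real.exp_mul]
        apply Real.exp_le_exp.mpr
        have := mul_le_mul_of_nonneg_left hs (mul_nonneg hδ hω.le)
        linarith
    _ ≤ _ := Real.rpow_le_rpow (Real.exp_nonneg _) hb hδ

lemma measurable_psiF_lamF (d : ℕ) (ν : ℝ) :
    Measurable fun p : ℝ × ℝ => psiF d ν (lamF p.1 p.2) := by
  unfold psiF lamF
  fun_prop

lemma integrable_psiF {d : ℕ} (hd : 1 ≤ d) {ν ω : ℝ} (hν : 0 < ν) (hω : 0 < ω) (hω1 : ω ≤ 1) :
    IntegrableOn (fun r : ℝ => r ^ (ν - 1) * (1 - r) ^ ((d : ℝ) - 1) * psiF d ν (lamF ω r))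
      (Ioo 0 1) := by
  have hd0 : (0 : ℝ) < d := by exact_mod_cast hd
  have hm : Measurable fun r : ℝ => r ^ (ν - 1) * (1 - r) ^ ((d : ℝ) - 1) *
      psiF d ν (lamF ω r) := by
    unfold psiF lamF
    fun_prop
  have hb := integrable_beta hν (show 0 < (d : ℝ) / 2 by positivity)
  refine hb.mono' hm.aestronglyMeasurable ?_
  filter_upwards [ae_restrict_mem measurableSet_Ioo] with r hr
  have h0 := hr.1
  have h1 : 0 < 1 - r := by linarith [hr.2]
  have hp := psiF_nonneg (d := d) (ν := ν) hω hr
  rw [Real.norm_of_nonneg (by positivity)]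
  calc _ ≤ r ^ (ν - 1) * (1 - r) ^ ((d : ℝ) - 1) * (1 - r) ^ (-((d : ℝ) / 2)) := by
        gcongr; exact psiF_le hν hω hω1 hr
    _ = _ := by
        rw [mul_assoc, ← Real.rpow_add h1]
        congr 2; ring

lemma shrinkF_le {d : ℕ} (hd : 1 ≤ d) {ν ω : ℝ} (hν : 0 < ν) (hω : 0 < ω) (hω1 : ω ≤ 1) :
    shrinkF d ν ω ≤ ProbabilityTheory.beta ν (d / 2) / ProbabilityTheory.beta ν d := by
  have hd0 : (0 : ℝ) < d := by exact_mod_cast hd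
  have hB := ProbabilityTheory.beta_pos hν hd0
  unfold shrinkF
  gcongr
  rw [← integral_beta hν (show 0 < (d : ℝ) / 2 by positivity)]
  refine setIntegral_mono_on (integrable_psiF hd hν hω hω1)
    (integrable_beta hν (by positivity)) measurableSet_Ioo fun r hr => ?_
  have h0 := hr.1
  have h1 : 0 < 1 - r := by linarith [hr.2]
  calc _ ≤ r ^ (ν - 1) * (1 - r) ^ ((d : ℝ) - 1) * (1 - r) ^ (-((d : ℝ) / 2)) := by
        gcongr; exact psiF_le hν hω hω1 hr
    _ = _ := by
        rw [mul_assoc, ← Real.rpow_add h1]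
        congr 2; ring

/-- Jensen's inequality applied to `exp_le_psiF`. -/
lemma exp_le_shrinkF {d : ℕ} (hd : 1 ≤ d) {ν ω : ℝ} (hν : 0 < ν) (hνd : ν ≤ d) (hω : 0 < ω)
    (hω1 : ω ≤ 1) (K : ℕ) :
    Real.exp (((d : ℝ) - ν) / 2 * ω * ∑ i ∈ Finset.range K,
      ProbabilityTheory.beta (ν + (i + 1)) d / ProbabilityTheory.beta ν d / ((i : ℝ) + 1)) ≤
      shrinkF d ν ω := by
  have hd0 : (0 : ℝ) < d := by exact_mod_cast hd
  have hB := ProbabilityTheory.beta_pos hν hd0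
  set δ := ((d : ℝ) - ν) / 2 * ω with hδ
  set m := ∑ i ∈ Finset.range K,
      ProbabilityTheory.beta (ν + (i + 1)) d / ProbabilityTheory.beta ν d / ((i : ℝ) + 1) with hm
  have hc : ∀ r ∈ Ioo (0 : ℝ) 1, r ^ (ν - 1) * (1 - r) ^ ((d : ℝ) - 1) *
      (∑ i ∈ Finset.range K, r ^ (i + 1) / ((i : ℝ) + 1)) =
      ∑ i ∈ Finset.range K,
        (r ^ (ν + ((i : ℝ) + 1) - 1) * (1 - r) ^ ((d : ℝ) - 1)) / ((i : ℝ) + 1) := by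
    intro r hr
    rw [Finset.mul_sum]
    refine Finset.sum_congr rfl fun i _ => ?_
    have : r ^ (ν + ((i : ℝ) + 1) - 1) = r ^ (ν - 1) * r ^ (i + 1) := by
      rw [← Real.rpow_natCast, ← Real.rpow_add hr.1]
      congr 1; push_cast; ring
    rw [this]; ring
  have hib := fun i : ℕ => integrable_beta (show 0 < ν + ((i : ℝ) + 1) by positivity) hd0
  have hi1 : IntegrableOn (fun r : ℝ => ∑ i ∈ Finset.range K,
        (r ^ (ν + ((i : ℝ) + 1) - 1) * (1 - r) ^ ((d : ℝ) - 1)) / ((i : ℝ) + 1)) (Ioo 0 1) :=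
    integrable_finsetSum _ fun i _ => (hib i).div_const _
  have hI1 : ∫ r in Ioo (0 : ℝ) 1, ∑ i ∈ Finset.range K,
        (r ^ (ν + ((i : ℝ) + 1) - 1) * (1 - r) ^ ((d : ℝ) - 1)) / ((i : ℝ) + 1) =
      ProbabilityTheory.beta ν d * m := by
    rw [integral_finsetSum _ fun i _ => (hib i).div_const _, hm, Finset.mul_sum]
    refine Finset.sum_congr rfl fun i _ => ?_
    rw [integral_div, integral_beta (by positivity) hd0]
    field_simp
  have hi0 := integrable_beta hν hd0
  have hintg : ∫ r in Ioo (0 : ℝ) 1, Real.exp (δ * m) *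
      ((1 - δ * m) * (r ^ (ν - 1) * (1 - r) ^ ((d : ℝ) - 1)) + δ *
        ∑ i ∈ Finset.range K,
        (r ^ (ν + ((i : ℝ) + 1) - 1) * (1 - r) ^ ((d : ℝ) - 1)) / ((i : ℝ) + 1)) =
      Real.exp (δ * m) * ProbabilityTheory.beta ν d := by
    rw [integral_const_mul, integral_add (hi0.const_mul _) (hi1.const_mul _), integral_const_mul,
      integral_const_mul, hI1, integral_beta hν hd0]
    ring
  unfold shrinkF
  rw [le_div_iff₀ hB, ← hintg]
  refine setIntegral_mono_on (((hi0.const_mul _).add (hi1.const_mul _)).const_mul _)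
    (integrable_psiF hd hν hω hω1) measurableSet_Ioo fun r hr => ?_
  have h0 := hr.1
  have h1 : 0 < 1 - r := by linarith [hr.2]
  have hw : 0 ≤ r ^ (ν - 1) * (1 - r) ^ ((d : ℝ) - 1) := by positivity
  have he := exp_le_psiF hν hνd hω hω1 hr K
  rw [← hδ] at he
  rw [← hc r hr]
  set c := ∑ i ∈ Finset.range K, r ^ (i + 1) / ((i : ℝ) + 1)
  have hexp : Real.exp (δ * m) * (1 + (δ * c - δ * m)) ≤ Real.exp (δ * c) := by
    have h := Real.add_one_le_exp (δ * c - δ * m)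
    calc _ ≤ Real.exp (δ * m) * Real.exp (δ * c - δ * m) := by
          gcongr; linarith
      _ = _ := by rw [← Real.exp_add]; congr 1; ring
  have := mul_le_mul_of_nonneg_left (hexp.trans he) hw
  linarith

lemma shrinkF_pos {d : ℕ} (hd : 1 ≤ d) {ν ω : ℝ} (hν : 0 < ν) (hνd : ν ≤ d) (hω : 0 < ω)
    (hω1 : ω ≤ 1) : 0 < shrinkF d ν ω :=
  (Real.exp_pos _).trans_le (exp_le_shrinkF hd hν hνd hω hω1 0)

lemma beta_add_one_div {a b : ℝ} (ha : 0 < a) (hb : 0 < b) :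
    ProbabilityTheory.beta (a + 1) b / ProbabilityTheory.beta a b = a / (a + b) := by
  unfold ProbabilityTheory.beta
  have h1 := Real.Gamma_pos_of_pos ha
  have h2 := Real.Gamma_pos_of_pos hb
  have h3 := Real.Gamma_pos_of_pos (add_pos ha hb)
  rw [Real.Gamma_add_one ha.ne', show a + 1 + b = (a + b) + 1 by ring,
    Real.Gamma_add_one (add_pos ha hb).ne']
  field_simp

lemma beta_one_right {a : ℝ} (ha : 0 < a) : ProbabilityTheory.beta a 1 = 1 / a := by
  unfold ProbabilityTheory.beta
  have h1 := Real.Gamma_pos_of_pos ha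
  rw [Real.Gamma_add_one ha.ne', Real.Gamma_one]
  field_simp

/-- For `d ≥ 2` the first term of the series of `-log(1-r)` in `exp_le_shrinkF` suffices; for `d = 1`
five terms are needed. The threshold `1/200` for `ν` is what these numerical bounds require. -/
lemma log_shrinkF_ge {d : ℕ} (hd : 1 ≤ d) {ν ω : ℝ} (hν : 0 < ν) (hν1 : ν ≤ 1 / 200)
    (hω : 0 < ω) (hω1 : ω ≤ 1) :
    ν * (kap d * ω) ≤ Real.log (shrinkF d ν ω) := by
  have hdR : (1 : ℝ) ≤ d := by exact_mod_cast hd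
  rw [Real.le_log_iff_exp_le (shrinkF_pos hd hν (by linarith) hω hω1)]
  by_cases h1 : d = 1
  · subst h1
    refine le_trans (Real.exp_le_exp.mpr ?_)
      (exp_le_shrinkF le_rfl hν (by norm_num; linarith) hω hω1 5)
    have hb : ∀ i : ℕ, ProbabilityTheory.beta (ν + (i + 1)) (1 : ℕ) /
        ProbabilityTheory.beta ν (1 : ℕ) = ν / (ν + (i + 1)) := by
      intro i
      rw [Nat.cast_one, beta_one_right hν, beta_one_right (by positivity)]
      field_simp
    simp only [hb, kap, if_true]
    have hsum : (18 / 25 : ℝ) ≤ (1 - ν) / 2 * ∑ i ∈ Finset.range 5,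
        1 / ((ν + (i + 1)) * ((i : ℝ) + 1)) := by
      have hl : ∑ i ∈ Finset.range 5, 1 / ((1 / 200 + ((i : ℝ) + 1)) * ((i : ℝ) + 1)) ≤
          ∑ i ∈ Finset.range 5, 1 / ((ν + ((i : ℝ) + 1)) * ((i : ℝ) + 1)) := by
        gcongr
      have hn : (2 * (18 / 25) / (199 / 200) : ℝ) ≤
          ∑ i ∈ Finset.range 5, 1 / ((1 / 200 + ((i : ℝ) + 1)) * ((i : ℝ) + 1)) := by
        simp only [Finset.sum_range_succ, Finset.sum_range_zero]
        norm_num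
      have := mul_le_mul (show (199 / 200 : ℝ) / 2 ≤ (1 - ν) / 2 by linarith) (hn.trans hl)
        (by norm_num) (by linarith)
      norm_num at this ⊢
      linarith
    have e : ∑ i ∈ Finset.range 5, ν / (ν + ((i : ℝ) + 1)) / ((i : ℝ) + 1) =
        ν * ∑ i ∈ Finset.range 5, 1 / ((ν + (i + 1)) * ((i : ℝ) + 1)) := by
      rw [Finset.mul_sum]
      refine Finset.sum_congr rfl fun i _ => ?_
      rw [div_div, mul_one_div]
    rw [e, Nat.cast_one]
    have := mul_le_mul_of_nonneg_left hsum (mul_pos hν hω).le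
    linarith
  · have h2 : (2 : ℝ) ≤ d := by exact_mod_cast (by omega : 2 ≤ d)
    refine le_trans (Real.exp_le_exp.mpr ?_)
      (exp_le_shrinkF hd hν (by linarith) hω hω1 1)
    simp only [Finset.sum_range_one, Nat.cast_zero, zero_add, div_one]
    rw [beta_add_one_div hν (by linarith), kap, if_neg h1]
    have : (2 / 5 : ℝ) ≤ ((d : ℝ) - ν) / 2 / (ν + d) := by
      rw [le_div_iff₀ (by linarith)]; linarith
    have := mul_le_mul_of_nonneg_left this (mul_pos hν hω).le
    calc _ = ν * ω * (2 / 5) := by ring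
      _ ≤ _ := this
      _ = _ := by ring

lemma measurable_shrinkF (d : ℕ) (ν : ℝ) : Measurable (shrinkF d ν) := by
  unfold shrinkF
  refine Measurable.div_const ?_ _
  have hm := measurable_psiF_lamF d ν
  have : StronglyMeasurable fun p : ℝ × ℝ =>
      p.2 ^ (ν - 1) * (1 - p.2) ^ ((d : ℝ) - 1) * psiF d ν (lamF p.1 p.2) :=
    Measurable.stronglyMeasurable (by fun_prop)
  exact (this.integral_prod_right (ν := volume.restrict (Ioo (0:ℝ) 1))).measurable

/-! ### Comparison of the risks -/

lemma integral_gaussM (d : ℕ) (μ : Euc d) {τ : ℝ} (hτ : 0 < τ) (f : Euc d → ℝ) :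
    ∫ z, f z ∂(gaussM d μ τ) = ∫ z, gaussPdf d z μ τ * f z := by
  unfold gaussM
  rw [integral_withDensity_eq_integral_toReal_smul (gaussPdf_measurable' d μ τ)
    (ae_of_all _ fun _ => ENNReal.ofReal_lt_top)]
  refine integral_congr_ae (ae_of_all _ fun z => ?_)
  simp only [smul_eq_mul]
  rw [ENNReal.toReal_ofReal (gaussPdf_pos d z μ hτ).le]

lemma integral_chiM {d : ℕ} (hd : 1 ≤ d) {σ2 : ℝ} (hσ : 0 < σ2) (f : ℝ → ℝ) :
    ∫ s, f s ∂(chiM d σ2) = ∫ s in Ioi (0 : ℝ), chiSqPdf d (s / σ2) / σ2 * f s := by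
  unfold chiM
  rw [integral_withDensity_eq_integral_toReal_smul (chi_measurable' d σ2)
    (ae_of_all _ fun _ => ENNReal.ofReal_lt_top)]
  refine setIntegral_congr_fun measurableSet_Ioi fun s hs => ?_
  simp only [smul_eq_mul]
  rw [ENNReal.toReal_ofReal (chi_nonneg hd hσ hs)]

/-- The risk is the expected log-ratio under the joint law, provided that log-ratio is
integrable. -/
lemma klRisk_eq {d : ℕ} (hd : 1 ≤ d) (μ : Euc d) {σ2 : ℝ} (hσ : 0 < σ2)
    (p : Euc d → Euc d → ℝ → ℝ) (g : ℝ × Euc d × Euc d → ℝ)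
    (hg : Integrable g (jointM d μ σ2))
    (hpg : ∀ s, 0 < s → ∀ x y, Real.log (gaussPdf d y μ σ2 / p y x s) = g (s, x, y)) :
    klRisk d 2 μ σ2 p = ∫ w, g w ∂(jointM d μ σ2) := by
  have hstep : ∫ w, g w ∂(jointM d μ σ2) =
      ∫ s, ∫ x, ∫ y, g (s, x, y) ∂(gaussM d μ σ2) ∂(gaussM d μ (σ2 / 2)) ∂(chiM d σ2) := by
    unfold jointM at hg ⊢
    rw [integral_prod _ hg]
    refine integral_congr_ae ?_
    filter_upwards [hg.prod_right_ae] with s hs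
    exact integral_prod _ hs
  rw [hstep, integral_chiM hd hσ]
  unfold klRisk
  refine setIntegral_congr_fun measurableSet_Ioi fun s hs => ?_
  have e : (((2 : ℕ) : ℝ) - 1) * (d : ℝ) = d := by push_cast; ring
  simp only [e]
  rw [integral_gaussM d μ (half_pos hσ), ← integral_const_mul]
  refine integral_congr_ae (ae_of_all _ fun x => ?_)
  simp only
  rw [integral_gaussM d μ hσ]
  simp only [hpg s hs x, Nat.cast_ofNat]
  ring

lemma integrable_abs_log_fst {d : ℕ} (hd : 1 ≤ d) (μ : Euc d) {σ2 : ℝ} (hσ : 0 < σ2) :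
    Integrable (fun w => |Real.log w.1|) (jointM d μ σ2) := by
  have := isProbabilityMeasure_gaussM d μ hσ
  have := isProbabilityMeasure_gaussM d μ (half_pos hσ)
  have h : Integrable (fun s => |Real.log s|) (chiM d σ2) := by
    unfold chiM
    rw [integrable_withDensity_iff_integrable_smul' (chi_measurable' d σ2)
      (ae_of_all _ fun _ => ENNReal.ofReal_lt_top)]
    refine (integrable_log_chi hd hσ).congr
      (ae_restrict_of_forall_mem measurableSet_Ioi fun s hs => ?_)
    simp only [smul_eq_mul]
    rw [ENNReal.toReal_ofReal (chi_nonneg hd hσ hs)]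
  exact h.comp_fst _

lemma integrable_of_lintegral {α : Type*} [MeasurableSpace α] {m : Measure α} {f : α → ℝ}
    (hf : Measurable f) (h0 : ∀ᵐ a ∂m, 0 ≤ f a) (h : ∫⁻ a, ENNReal.ofReal (f a) ∂m ≠ ⊤) :
    Integrable f m := by
  refine ⟨hf.aestronglyMeasurable, ?_⟩
  rw [hasFiniteIntegral_iff_ofReal h0]
  exact h.lt_top

lemma integrable_sq_gaussM {d : ℕ} (hd : 1 ≤ d) (μ z : Euc d) {τ : ℝ} (hτ : 0 < τ) :
    Integrable (fun y => ‖y - z‖ ^ 2) (gaussM d μ τ) := by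
  refine integrable_of_lintegral (by fun_prop) (ae_of_all _ fun _ => sq_nonneg _) ?_
  rw [lintegral_sq_sub_gaussM hd μ z hτ]
  exact ENNReal.add_ne_top.mpr ⟨ENNReal.ofReal_ne_top, ENNReal.ofReal_ne_top⟩

lemma integrable_sq_snd {d : ℕ} (hd : 1 ≤ d) (μ z : Euc d) {σ2 : ℝ} (hσ : 0 < σ2) :
    Integrable (fun w => ‖w.2.2 - z‖ ^ 2) (jointM d μ σ2) := by
  have := isProbabilityMeasure_gaussM d μ (half_pos hσ)
  have := isProbabilityMeasure_chiM hd hσ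
  exact ((integrable_sq_gaussM hd μ z hσ).comp_snd (gaussM d μ (σ2 / 2))).comp_snd (chiM d σ2)

lemma integrable_T3 {d : ℕ} (hd : 1 ≤ d) (μ : Euc d) {σ2 : ℝ} (hσ : 0 < σ2) :
    Integrable (T3 (d := d)) (jointM d μ σ2) := by
  have := isProbabilityMeasure_gaussM d μ hσ
  have := isProbabilityMeasure_gaussM d μ (half_pos hσ)
  have := isProbabilityMeasure_chiM hd hσ
  have h1 : Integrable (fun s : ℝ => s) (chiM d σ2) := by
    refine integrable_of_lintegral measurable_id
      ((withDensity_absolutelyContinuous _ _).ae_le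
        (ae_restrict_of_forall_mem measurableSet_Ioi fun s hs => le_of_lt hs)) ?_
    rw [lintegral_chiM_id hd hσ]
    exact ENNReal.ofReal_ne_top
  have h2 : Integrable (fun w => ‖w.2.1‖ ^ 2) (jointM d μ σ2) := by
    have := integrable_sq_gaussM hd μ 0 (half_pos hσ)
    simp only [sub_zero] at this
    exact (this.comp_fst (gaussM d μ σ2)).comp_snd (chiM d σ2)
  have h3 := integrable_sq_snd hd μ 0 hσ
  simp only [sub_zero] at h3
  exact ((h1.comp_fst ((gaussM d μ (σ2 / 2)).prod (gaussM d μ σ2))).add (h2.const_mul 2)).add h3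

lemma S3_le_T3 {d : ℕ} (w : ℝ × Euc d × Euc d) : S3 w ≤ T3 w := by
  unfold S3 T3
  have h1 := @norm_sub_sq_real _ _ _ w.2.2 w.2.1
  have h2 := abs_le.mp (abs_real_inner_le_norm w.2.2 w.2.1)
  nlinarith [sq_nonneg (2 * ‖w.2.1‖ - ‖w.2.2‖), sq_nonneg ‖w.2.1‖]

lemma T_pos {d : ℕ} {w : ℝ × Euc d × Euc d} (hw : 0 < w.1) : 0 < S3 w ∧ 0 < T2 w ∧ 0 < T3 w := by
  unfold S3 T2 T3
  exact ⟨by positivity, by positivity, by positivity⟩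

/-- Every statistic between `s` and `T₃` has an integrable logarithm. -/
lemma integrable_log_of_le {d : ℕ} (hd : 1 ≤ d) (μ : Euc d) {σ2 : ℝ} (hσ : 0 < σ2)
    {X : ℝ × Euc d × Euc d → ℝ} (hX : Measurable X) (h1 : ∀ w, w.1 ≤ X w) (h2 : ∀ w, X w ≤ T3 w) :
    Integrable (fun w => Real.log (X w)) (jointM d μ σ2) := by
  refine ((integrable_abs_log_fst hd μ hσ).add (integrable_T3 hd μ hσ)).mono'
    hX.log.aestronglyMeasurable ?_
  filter_upwards [ae_jointM_pos d μ σ2] with w hw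
  have hXp : 0 < X w := hw.trans_le (h1 w)
  have ha := Real.log_le_log hw (h1 w)
  have hb := Real.log_le_sub_one_of_pos hXp
  have hc := neg_abs_le (Real.log w.1)
  have hd' := abs_nonneg (Real.log w.1)
  have := h2 w
  rw [Real.norm_eq_abs, Pi.add_apply, abs_le]
  constructor <;> linarith

lemma integrable_log_T2 {d : ℕ} (hd : 1 ≤ d) (μ : Euc d) {σ2 : ℝ} (hσ : 0 < σ2) :
    Integrable (fun w => Real.log (T2 w)) (jointM d μ σ2) :=
  integrable_log_of_le hd μ hσ measurable_T2
    (fun w => by unfold T2; nlinarith [sq_nonneg ‖w.2.1‖])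
    (fun w => by unfold T2 T3; nlinarith [sq_nonneg ‖w.2.2‖])

lemma integrable_log_T3 {d : ℕ} (hd : 1 ≤ d) (μ : Euc d) {σ2 : ℝ} (hσ : 0 < σ2) :
    Integrable (fun w => Real.log (T3 w)) (jointM d μ σ2) :=
  integrable_log_of_le hd μ hσ measurable_T3
    (fun w => by unfold T3; nlinarith [sq_nonneg ‖w.2.1‖, sq_nonneg ‖w.2.2‖])
    (fun w => le_rfl)

lemma integrable_log_S3 {d : ℕ} (hd : 1 ≤ d) (μ : Euc d) {σ2 : ℝ} (hσ : 0 < σ2) :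
    Integrable (fun w => Real.log (S3 w)) (jointM d μ σ2) :=
  integrable_log_of_le hd μ hσ measurable_S3
    (fun w => by unfold S3; nlinarith [sq_nonneg ‖w.2.2 - w.2.1‖]) S3_le_T3

lemma integrable_log_s {d : ℕ} (hd : 1 ≤ d) (μ : Euc d) {σ2 : ℝ} (hσ : 0 < σ2) :
    Integrable (fun w => Real.log w.1) (jointM d μ σ2) :=
  integrable_log_of_le hd μ hσ measurable_fst (fun w => le_rfl)
    (fun w => by unfold T3; nlinarith [sq_nonneg ‖w.2.1‖, sq_nonneg ‖w.2.2‖])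

/-- The log-likelihood ratio of the true density to the best equivariant one, expanded. -/
def logRatioR (d : ℕ) (μ : Euc d) (σ2 : ℝ) (w : ℝ × Euc d × Euc d) : ℝ :=
  -(d : ℝ) / 2 * Real.log (2 * Real.pi * σ2) - 1 / (2 * σ2) * ‖w.2.2 - μ‖ ^ 2 -
    (Real.log (Real.Gamma d / Real.Gamma (d / 2)) + d / 2 * Real.log (2 / (3 * Real.pi))) -
    d / 2 * Real.log w.1 + d * Real.log (S3 w)

/-- The log of the ratio of the Bayesian predictive density to the best equivariant one. -/
def logGain (d : ℕ) (ν : ℝ) (w : ℝ × Euc d × Euc d) : ℝ :=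
  ν * (Real.log (3 / 2) + Real.log (T2 w) - Real.log (T3 w)) +
    Real.log (shrinkF d ν (S3 w / T3 w))

lemma integrable_logRatioR {d : ℕ} (hd : 1 ≤ d) (μ : Euc d) {σ2 : ℝ} (hσ : 0 < σ2) :
    Integrable (logRatioR d μ σ2) (jointM d μ σ2) := by
  have := isProbabilityMeasure_jointM hd μ hσ
  unfold logRatioR
  exact (((((integrable_const _).sub ((integrable_sq_snd hd μ μ hσ).const_mul _)).sub
    (integrable_const _)).sub ((integrable_log_s hd μ hσ).const_mul _))).add
      ((integrable_log_S3 hd μ hσ).const_mul _)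

lemma ratio_mem {d : ℕ} {w : ℝ × Euc d × Euc d} (hw : 0 < w.1) :
    0 < S3 w / T3 w ∧ S3 w / T3 w ≤ 1 := by
  obtain ⟨h1, -, h3⟩ := T_pos hw
  exact ⟨div_pos h1 h3, (div_le_one h3).mpr (S3_le_T3 w)⟩

lemma kap_nonneg (d : ℕ) : 0 ≤ kap d := by unfold kap; split_ifs <;> norm_num

lemma integrable_log_shrinkF {d : ℕ} (hd : 1 ≤ d) (μ : Euc d) {σ2 ν : ℝ} (hσ : 0 < σ2)
    (hν : 0 < ν) (hν1 : ν ≤ 1 / 200) :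
    Integrable (fun w => Real.log (shrinkF d ν (S3 w / T3 w))) (jointM d μ σ2) := by
  have := isProbabilityMeasure_jointM hd μ hσ
  have hdR : (1 : ℝ) ≤ d := by exact_mod_cast hd
  have hm : Measurable fun w : ℝ × Euc d × Euc d => Real.log (shrinkF d ν (S3 w / T3 w)) :=
    ((measurable_shrinkF d ν).comp (measurable_S3.div measurable_T3)).log
  refine (integrable_const (Real.log
    (ProbabilityTheory.beta ν (d / 2) / ProbabilityTheory.beta ν d))).mono'
    hm.aestronglyMeasurable ?_
  filter_upwards [ae_jointM_pos d μ σ2] with w hw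
  obtain ⟨h0, h1⟩ := ratio_mem hw
  have hl := log_shrinkF_ge hd hν hν1 h0 h1
  have hk := kap_nonneg d
  rw [Real.norm_of_nonneg (le_trans (by positivity) hl)]
  exact Real.log_le_log (shrinkF_pos hd hν (by linarith) h0 h1) (shrinkF_le hd hν h0 h1)

lemma integrable_logGain {d : ℕ} (hd : 1 ≤ d) (μ : Euc d) {σ2 ν : ℝ} (hσ : 0 < σ2)
    (hν : 0 < ν) (hν1 : ν ≤ 1 / 200) :
    Integrable (logGain d ν) (jointM d μ σ2) := by
  have := isProbabilityMeasure_jointM hd μ hσ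
  unfold logGain
  exact ((((integrable_const _).add (integrable_log_T2 hd μ hσ)).sub
    (integrable_log_T3 hd μ hσ)).const_mul _).add (integrable_log_shrinkF hd μ hσ hν hν1)

lemma bestEquiv_two {d : ℕ} {s : ℝ} (hs : 0 < s) (x y : Euc d) :
    bestEquiv d 2 y x s = Real.Gamma d / Real.Gamma (d / 2) *
      (2 / (3 * Real.pi) / s) ^ ((d : ℝ) / 2) * (S3 (s, x, y) / s) ^ (-(d : ℝ)) := by
  have hS' : 1 + ((2 : ℕ) : ℝ) / ((((2 : ℕ) : ℝ) + 1) * s) * ‖y - x‖ ^ 2 = S3 (s, x, y) / s := by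
    unfold S3
    push_cast
    field_simp
    ring
  have e1 : ((2 : ℕ) : ℝ) * (d : ℝ) / 2 = d := by push_cast; ring
  have e2 : (((2 : ℕ) : ℝ) - 1) * (d : ℝ) / 2 = d / 2 := by push_cast; ring
  have e3 : -(((2 : ℕ) : ℝ) * (d : ℝ)) / 2 = -d := by push_cast; ring
  have e4 : ((2 : ℕ) : ℝ) / ((((2 : ℕ) : ℝ) + 1) * Real.pi * s) = 2 / (3 * Real.pi) / s := by
    rw [div_div]; push_cast; norm_num
  unfold bestEquiv
  rw [hS', e1, e2, e3, e4]

lemma bestEquiv_pos {d : ℕ} (hd : 1 ≤ d) {s : ℝ} (hs : 0 < s) (x y : Euc d) :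
    0 < bestEquiv d 2 y x s := by
  have hd0 : (0 : ℝ) < d := by exact_mod_cast hd
  have hS := (T_pos (w := (s, x, y)) hs).1
  have h1 := Real.Gamma_pos_of_pos hd0
  have h2 := Real.Gamma_pos_of_pos (half_pos hd0)
  rw [bestEquiv_two hs]
  positivity

lemma log_ratio_bestEquiv {d : ℕ} (hd : 1 ≤ d) (μ : Euc d) {σ2 : ℝ} (hσ : 0 < σ2) {s : ℝ}
    (hs : 0 < s) (x y : Euc d) :
    Real.log (gaussPdf d y μ σ2 / bestEquiv d 2 y x s) = logRatioR d μ σ2 (s, x, y) := by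
  have hd0 : (0 : ℝ) < d := by exact_mod_cast hd
  have hS := (T_pos (w := (s, x, y)) hs).1
  have h1 := Real.Gamma_pos_of_pos hd0
  have h2 := Real.Gamma_pos_of_pos (half_pos hd0)
  have hR := bestEquiv_pos hd hs x y
  have hgauss : Real.log (gaussPdf d y μ σ2) =
      -(d : ℝ) / 2 * Real.log (2 * Real.pi * σ2) + -‖y - μ‖ ^ 2 / (2 * σ2) := by
    have hp : 0 < 2 * Real.pi * σ2 := by positivity
    rw [gaussPdf, Real.log_mul (Real.rpow_pos_of_pos hp _).ne' (Real.exp_ne_zero _),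
      Real.log_exp, Real.log_rpow hp]
  have hc : 0 < 2 / (3 * Real.pi) := by positivity
  have hbest : Real.log (bestEquiv d 2 y x s) = Real.log (Real.Gamma d / Real.Gamma (d / 2)) +
      d / 2 * (Real.log (2 / (3 * Real.pi)) - Real.log s) +
      -(d : ℝ) * (Real.log (S3 (s, x, y)) - Real.log s) := by
    have hp1 := Real.rpow_pos_of_pos (div_pos hc hs) ((d : ℝ) / 2)
    have hp2 := Real.rpow_pos_of_pos (div_pos hS hs) (-(d : ℝ))
    rw [bestEquiv_two hs, Real.log_mul (mul_pos (div_pos h1 h2) hp1).ne' hp2.ne',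
      Real.log_mul (div_pos h1 h2).ne' hp1.ne', Real.log_rpow (div_pos hc hs),
      Real.log_rpow (div_pos hS hs), Real.log_div hS.ne' hs.ne', Real.log_div hc.ne' hs.ne']
  rw [Real.log_div (gaussPdf_pos d y μ hσ).ne' hR.ne', hgauss, hbest, logRatioR]
  ring

lemma log_ratio_bayes {d : ℕ} (hd : 1 ≤ d) (μ : Euc d) {σ2 ν : ℝ} (hσ : 0 < σ2) (hν : 0 < ν)
    (hν1 : ν ≤ 1 / 200) {s : ℝ} (hs : 0 < s) (x y : Euc d) :
    Real.log (gaussPdf d y μ σ2 / bayesPred d 2 (gmPrior d ν (qLow d 2 ν)) y x s) =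
      logRatioR d μ σ2 (s, x, y) - logGain d ν (s, x, y) := by
  have hdR : (1 : ℝ) ≤ d := by exact_mod_cast hd
  obtain ⟨-, hT2, hT3⟩ := T_pos (w := (s, x, y)) hs
  obtain ⟨h0, h1⟩ := ratio_mem (w := (s, x, y)) hs
  have hF := shrinkF_pos hd hν (by linarith) h0 h1
  have hR := bestEquiv_pos hd hs x y
  have hG := gaussPdf_pos d y μ hσ
  rw [bayesPred_eq hd hν hs, ← div_div, Real.log_div (by positivity) (by positivity),
    log_ratio_bestEquiv hd μ hσ hs, logGain, Real.log_mul (by positivity) hF.ne',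
    Real.log_rpow (by positivity), mul_div_mul_comm, Real.log_mul (by positivity) (by positivity),
    Real.log_div hT2.ne' hT3.ne']
  ring

/-- Nonnegativity of the risk difference, from `log_shrinkF_ge` and `key_lintegral`. -/
lemma integral_logGain_nonneg {d : ℕ} (hd1 : 1 ≤ d) (hd4 : d ≤ 4) (μ : Euc d) {σ2 ν : ℝ}
    (hσ : 0 < σ2) (hν : 0 < ν) (hν1 : ν ≤ 1 / 200) :
    0 ≤ ∫ w, logGain d ν w ∂(jointM d μ σ2) := by
  have := isProbabilityMeasure_jointM hd1 μ hσ
  have hk := kap_nonneg d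
  have hpos := ae_jointM_pos d μ σ2
  have hLi : Integrable (fun w => Real.log (T3 w / T2 w)) (jointM d μ σ2) := by
    refine ((integrable_log_T3 hd1 μ hσ).sub (integrable_log_T2 hd1 μ hσ)).congr ?_
    filter_upwards [hpos] with w hw
    obtain ⟨-, hT2, hT3⟩ := T_pos hw
    rw [Real.log_div hT3.ne' hT2.ne', Pi.sub_apply]
  have hωi : Integrable (fun w => S3 w / T3 w) (jointM d μ σ2) := by
    refine (integrable_const (1 : ℝ)).mono'
      (measurable_S3.div measurable_T3).aestronglyMeasurable ?_
    filter_upwards [hpos] with w hw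
    obtain ⟨h0, h1⟩ := ratio_mem hw
    rwa [Real.norm_of_nonneg h0.le]
  have hω0 : 0 ≤ᵐ[jointM d μ σ2] fun w => S3 w / T3 w := by
    filter_upwards [hpos] with w hw using (ratio_mem hw).1.le
  have hL0 : 0 ≤ᵐ[jointM d μ σ2] fun w => Real.log (T3 w / T2 w) := by
    filter_upwards [hpos] with w hw
    obtain ⟨-, hT2, hT3⟩ := T_pos hw
    apply Real.log_nonneg
    rw [le_div_iff₀ hT2]
    unfold T2 T3
    nlinarith [sq_nonneg ‖w.2.2‖]
  have key := key_lintegral hd1 hd4 μ hσ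
  have hIω := integral_nonneg_of_ae hω0
  have hl := Real.log_nonneg (show (1 : ℝ) ≤ 3 / 2 by norm_num)
  rw [← ofReal_integral_eq_lintegral_ofReal hLi hL0,
    ← ofReal_integral_eq_lintegral_ofReal hωi hω0, ← ENNReal.ofReal_mul hk,
    ← ENNReal.ofReal_add hl (by positivity), ENNReal.ofReal_le_ofReal_iff (by positivity)] at key
  have hintg : ∫ w, ν * (Real.log (3 / 2) - Real.log (T3 w / T2 w) + kap d * (S3 w / T3 w))
      ∂(jointM d μ σ2) = ν * (Real.log (3 / 2) - ∫ w, Real.log (T3 w / T2 w) ∂(jointM d μ σ2) +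
        kap d * ∫ w, S3 w / T3 w ∂(jointM d μ σ2)) := by
    have hci : Integrable (fun w => Real.log (3 / 2) - Real.log (T3 w / T2 w)) (jointM d μ σ2) :=
      (integrable_const _).sub hLi
    rw [integral_const_mul, integral_add hci (hωi.const_mul _), integral_sub (integrable_const _) hLi, integral_const_mul, integral_const, probReal_univ,
      one_smul]
  have h0 : 0 ≤ ∫ w, ν * (Real.log (3 / 2) - Real.log (T3 w / T2 w) + kap d * (S3 w / T3 w))
      ∂(jointM d μ σ2) := by
    rw [hintg]
    exact mul_nonneg hν.le (by linarith)
  refine h0.trans (integral_mono_ae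
    ((((integrable_const _).sub hLi).add (hωi.const_mul _)).const_mul _)
    (integrable_logGain hd1 μ hσ hν hν1) ?_)
  filter_upwards [hpos] with w hw
  obtain ⟨-, hT2, hT3⟩ := T_pos hw
  obtain ⟨hr0, hr1⟩ := ratio_mem hw
  have := log_shrinkF_ge hd1 hν hν1 hr0 hr1
  rw [Real.log_div hT3.ne' hT2.ne', logGain]
  linarith

/-- for `n = 2` and `d ≤ 4`, there exists `ν* > 0` (depending only on `d`) such
that for every `0 < ν ≤ ν*`, the Bayesian predictive density with respect to the
Gaussian-mixture prior built from `q` of equation (5) dominates the best equivariant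
predictive density under the Kullback–Leibler risk. -/
theorem stmt_2 (d : ℕ) (hd1 : 1 ≤ d) (hd4 : d ≤ 4) :
    ∃ νstar : ℝ, 0 < νstar ∧ ∀ ν : ℝ, 0 < ν → ν ≤ νstar →
      ∀ (μ0 : Euc d) (σ2 : ℝ), 0 < σ2 →
        klRisk d 2 μ0 σ2 (bayesPred d 2 (gmPrior d ν (qLow d 2 ν))) ≤
          klRisk d 2 μ0 σ2 (bestEquiv d 2) := by
  refine ⟨1 / 200, by norm_num, fun ν hν hν1 μ σ2 hσ => ?_⟩
  have hR := integrable_logRatioR hd1 μ hσ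
  have hG := integrable_logGain hd1 μ hσ hν hν1
  rw [klRisk_eq hd1 μ hσ _ _ hR fun s hs x y => log_ratio_bestEquiv hd1 μ hσ hs x y,
    klRisk_eq hd1 μ hσ _ (fun w => logRatioR d μ σ2 w - logGain d ν w) (hR.sub hG)
      fun s hs x y => log_ratio_bayes hd1 μ hσ hν hν1 hs x y,
    integral_sub hR hG]
  linarith [integral_logGain_nonneg hd1 hd4 μ hσ hν hν1]

end
end
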